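/- Let n ≥ 2 and let ε ∈ (0, 1/√3), corresponding to a cone 𝒪_θ with θ = 2·arccos(ε) ∈ (2·arccos(1/√3), π). Then there exist α = α(ε) ∈ (1, 2) and a constant a₀ > 0 such that for every a > a₀ and every smooth compactly supported function u on Q_θ = (𝒪_θ ∩ {x₁ > 1}) × (0,1), the following Carleman inequality holds: ∫_{Q_θ} e^{2φ(x,t)} [ a(Λ(t) + φ̃(x))·u² + |∇u|² ] dx dt ≤ 4 ∫_{Q_θ} e^{2φ(x,t)} |∂ₜu + Δu|² dx dt, where φ(x,t) = a·Λ(t)·φ̃(x) + t², Λ(t) = (1−t)/t^{α/2}, and φ̃(x) = x₁^α − ε^α |x|^α. -/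

import Mathlib

open Real Set Filter MeasureTheory

/-- The Laplacian of `f` at `x`, computed as the sum of the second partial
derivatives in the coordinate directions. -/
noncomputable def lap {n : ℕ} (f : EuclideanSpace ℝ (Fin n) → ℝ)
    (x : EuclideanSpace ℝ (Fin n)) : ℝ :=
  ∑ i, fderiv ℝ (fun y => fderiv ℝ f y (EuclideanSpace.single i 1)) x
      (EuclideanSpace.single i 1)

/-- The open cone `𝒪_θ = {x : x₁ > |x| cos (θ/2)}` in `ℝⁿ`. -/
def cone (n : ℕ) [NeZero n] (θ : ℝ) : Set (EuclideanSpace ℝ (Fin n)) :=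
  {x | ‖x‖ * Real.cos (θ / 2) < x 0}

/-!
Put `v = e^φ u`. Conjugated by `e^φ`, the operator `∂ₜ + Δ` splits into `∂ₜ - 2 ∇φ · ∇ - h` and a
remainder, where the function `h` is free. Twice the product of the two parts, integrated by parts,
is a quadratic form in `(v, ∇v)` whose principal part is the Hessian of `φ`, shifted by a multiple
of the identity that depends on `h`; it is bounded by the integral of `|e^φ (∂ₜu + Δu)|²`.

The space weight `Φ` is not convex, but its Hessian is at least `-g/2` with
`g = 2 α ε^α |x|^(α-2)`, and `h = Δφ + a Λ g + 1/4` compensates for this deficit. The price is a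
zeroth order term of order `(a Λ)³`, whose coefficient is positive as soon as
`2 D²Φ(∇Φ, ∇Φ) ≥ g |∇Φ|²`. At `α = 2` this holds precisely because `ε² < 1/3`, so it persists for
`α < 2` close to `2`. Since `-Λ' ≥ Λ` and `-Λ' ≥ 1`, a large `a` absorbs all the remaining terms.
-/

open scoped ContDiff Topology InnerProductSpace

section DirectionalDerivative

variable {V : Type*} [NormedAddCommGroup V] [NormedSpace ℝ V] {f g φ : V → ℝ} {p : V}

/-- The derivative of `g` at `p` in the direction `w`. -/
noncomputable def dirDeriv (w : V) (g : V → ℝ) (p : V) : ℝ := fderiv ℝ g p w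

@[fun_prop]
theorem differentiableAt_of_contDiffAt_infty (hg : ContDiffAt ℝ ∞ g p) : DifferentiableAt ℝ g p :=
  hg.differentiableAt (by simp)

theorem eventually_differentiableAt_of_contDiffAt_infty (hg : ContDiffAt ℝ ∞ g p) :
    ∀ᶠ q in 𝓝 p, DifferentiableAt ℝ g q :=
  ((hg.of_le (m := 1) (by simp)).eventually (by simp)).mono fun _ hq =>
    hq.differentiableAt one_ne_zero

@[fun_prop]
theorem contDiffAt_dirDeriv (w : V) (hg : ContDiffAt ℝ ∞ g p) : ContDiffAt ℝ ∞ (dirDeriv w g) p :=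
  (hg.fderiv_right (m := ∞) (by simp)).clm_apply contDiffAt_const

@[fun_prop]
theorem contDiffAt_deriv {l : ℝ → ℝ} {t : ℝ} (hl : ContDiffAt ℝ ∞ l t) :
    ContDiffAt ℝ ∞ (deriv l) t :=
  contDiffAt_dirDeriv 1 hl

theorem dirDeriv_congr (h : f =ᶠ[𝓝 p] g) (w : V) : dirDeriv w f p = dirDeriv w g p := by
  simp only [dirDeriv, h.fderiv_eq]

theorem dirDeriv_add (w : V) (hf : DifferentiableAt ℝ f p) (hg : DifferentiableAt ℝ g p) :
    dirDeriv w (fun q => f q + g q) p = dirDeriv w f p + dirDeriv w g p := by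
  simp [dirDeriv, fderiv_fun_add hf hg]

theorem dirDeriv_sub (w : V) (hf : DifferentiableAt ℝ f p) (hg : DifferentiableAt ℝ g p) :
    dirDeriv w (fun q => f q - g q) p = dirDeriv w f p - dirDeriv w g p := by
  simp [dirDeriv, fderiv_fun_sub hf hg]

theorem dirDeriv_const_mul (w : V) (c : ℝ) (hg : DifferentiableAt ℝ g p) :
    dirDeriv w (fun q => c * g q) p = c * dirDeriv w g p := by
  simp [dirDeriv, fderiv_const_mul hg]

theorem dirDeriv_mul (w : V) (hf : DifferentiableAt ℝ f p) (hg : DifferentiableAt ℝ g p) :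
    dirDeriv w (fun q => f q * g q) p = f p * dirDeriv w g p + g p * dirDeriv w f p := by
  simp [dirDeriv, fderiv_fun_mul hf hg]

theorem dirDeriv_sum {ι : Type*} [Fintype ι] {g : ι → V → ℝ} (w : V)
    (hg : ∀ i, DifferentiableAt ℝ (g i) p) :
    dirDeriv w (fun q => ∑ i, g i q) p = ∑ i, dirDeriv w (g i) p := by
  simp [dirDeriv, fderiv_fun_sum fun i _ => hg i]

theorem dirDeriv_sum_smul {ι : Type*} [Fintype ι] (c : ι → ℝ) (e : ι → V) (g : V → ℝ) (p : V) :
    dirDeriv (∑ i, c i • e i) g p = ∑ i, c i * dirDeriv (e i) g p := by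
  simp [dirDeriv]

theorem dirDeriv_exp_mul (w : V) (hφ : DifferentiableAt ℝ φ p) (hg : DifferentiableAt ℝ g p) :
    dirDeriv w (fun q => exp (φ q) * g q) p =
      exp (φ p) * (dirDeriv w g p + dirDeriv w φ p * g p) := by
  simp only [dirDeriv, fderiv_fun_mul hφ.exp hg, fderiv_exp hφ, add_apply, smul_apply, smul_eq_mul]
  ring

theorem dirDeriv_comm (w z : V) (hg : ContDiffAt ℝ ∞ g p) :
    dirDeriv w (dirDeriv z g) p = dirDeriv z (dirDeriv w g) p := by
  have dirDeriv_eq_snd (a b : V) : dirDeriv a (dirDeriv b g) p = fderiv ℝ (fderiv ℝ g) p a b := by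
    have hd : DifferentiableAt ℝ (fderiv ℝ g) p :=
      (hg.fderiv_right (m := ∞) (by simp)).differentiableAt (by simp)
    change fderiv ℝ (fun q => fderiv ℝ g q b) p a = _
    simp [fderiv_clm_apply hd (differentiableAt_const b)]
  rw [dirDeriv_eq_snd, dirDeriv_eq_snd]
  exact (hg.isSymmSndFDerivAt (by
    rw [minSmoothness_of_isRCLikeNormedField]; exact WithTop.coe_le_coe.2 le_top)).eq w z

theorem dirDeriv_eq_zero_of_notMem {K : Set V} (hK : IsClosed K) (hg : ∀ q ∉ K, g q = 0)
    (hp : p ∉ K) (w : V) : dirDeriv w g p = 0 := by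
  rw [dirDeriv_congr (g := fun _ => 0) (eventually_of_mem (hK.isOpen_compl.mem_nhds hp) hg)]
  simp [dirDeriv]

end DirectionalDerivative

section CarreDuChamp

variable {V ι : Type*} [NormedAddCommGroup V] [NormedSpace ℝ V] [Fintype ι]
  (e : ι → V) {f g h φ u v : V → ℝ} {p : V}

/-- The sum of the second derivatives of `g` along the directions `e i`; the Laplacian when `e` is
an orthonormal basis. -/
noncomputable def laplacianAlong (g : V → ℝ) (p : V) : ℝ :=
  ∑ i, dirDeriv (e i) (dirDeriv (e i) g) p

/-- The carré du champ `⟪∇f, ∇g⟫` associated with `laplacianAlong e`. -/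
noncomputable def gradInner (f g : V → ℝ) (p : V) : ℝ :=
  ∑ i, dirDeriv (e i) f p * dirDeriv (e i) g p

/-- The Hessian of `φ` along the directions `e i`, evaluated on the gradient of `f`. -/
noncomputable def hessianForm (φ f : V → ℝ) (p : V) : ℝ :=
  ∑ i, ∑ j, dirDeriv (e i) (dirDeriv (e j) φ) p * dirDeriv (e i) f p * dirDeriv (e j) f p

@[fun_prop]
theorem contDiffAt_laplacianAlong (hg : ContDiffAt ℝ ∞ g p) :
    ContDiffAt ℝ ∞ (laplacianAlong e g) p := by
  unfold laplacianAlong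
  fun_prop

@[fun_prop]
theorem contDiffAt_gradInner (hf : ContDiffAt ℝ ∞ f p) (hg : ContDiffAt ℝ ∞ g p) :
    ContDiffAt ℝ ∞ (gradInner e f g) p := by
  unfold gradInner
  fun_prop

@[fun_prop]
theorem contDiffAt_hessianForm (hφ : ContDiffAt ℝ ∞ φ p) (hf : ContDiffAt ℝ ∞ f p) :
    ContDiffAt ℝ ∞ (hessianForm e φ f) p := by
  unfold hessianForm
  fun_prop

theorem gradInner_comm (f g : V → ℝ) (p : V) : gradInner e f g p = gradInner e g f p := by
  simp only [gradInner, mul_comm]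

theorem gradInner_eq_dirDeriv (f g : V → ℝ) (p : V) :
    gradInner e f g p = dirDeriv (∑ i, dirDeriv (e i) g p • e i) f p := by
  simp only [gradInner, dirDeriv_sum_smul, mul_comm]

theorem gradInner_sub_left (g : V → ℝ) (hf : DifferentiableAt ℝ f p) (hh : DifferentiableAt ℝ h p) :
    gradInner e (fun q => f q - h q) g p = gradInner e f g p - gradInner e h g p := by
  simp only [gradInner_eq_dirDeriv, dirDeriv_sub _ hf hh]

theorem gradInner_const_mul_left (c : ℝ) (g : V → ℝ) (hf : DifferentiableAt ℝ f p) :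
    gradInner e (fun q => c * f q) g p = c * gradInner e f g p := by
  simp only [gradInner_eq_dirDeriv, dirDeriv_const_mul _ c hf]

theorem gradInner_mul_left (g : V → ℝ) (hf : DifferentiableAt ℝ f p) (hh : DifferentiableAt ℝ h p) :
    gradInner e (fun q => f q * h q) g p = f p * gradInner e h g p + h p * gradInner e f g p := by
  simp only [gradInner_eq_dirDeriv, dirDeriv_mul _ hf hh]

theorem dirDeriv_gradInner (w : V) (hf : ContDiffAt ℝ ∞ f p) (hg : ContDiffAt ℝ ∞ g p) :
    dirDeriv w (gradInner e f g) p =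
      gradInner e (dirDeriv w f) g p + gradInner e f (dirDeriv w g) p := by
  have product_rule (i : ι) : dirDeriv w (fun q => dirDeriv (e i) f q * dirDeriv (e i) g q) p =
      dirDeriv (e i) (dirDeriv w f) p * dirDeriv (e i) g p +
        dirDeriv (e i) f p * dirDeriv (e i) (dirDeriv w g) p := by
    rw [dirDeriv_mul w (by fun_prop) (by fun_prop), dirDeriv_comm w _ hf, dirDeriv_comm w _ hg]
    ring
  calc dirDeriv w (gradInner e f g) p
      = ∑ i, dirDeriv w (fun q => dirDeriv (e i) f q * dirDeriv (e i) g q) p :=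
        dirDeriv_sum w fun i => by fun_prop
    _ = _ := by simp only [product_rule, gradInner, Finset.sum_add_distrib]

theorem hessianForm_eq_dirDeriv_dirDeriv (f : V → ℝ) (hφ : ContDiffAt ℝ ∞ φ p) :
    hessianForm e φ f p = dirDeriv (∑ i, dirDeriv (e i) f p • e i)
      (dirDeriv (∑ i, dirDeriv (e i) f p • e i) φ) p := by
  have inner_derivative : dirDeriv (∑ i, dirDeriv (e i) f p • e i) φ =
      fun q => ∑ j, dirDeriv (e j) f p * dirDeriv (e j) φ q :=
    funext fun q => dirDeriv_sum_smul _ e φ q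
  rw [inner_derivative, dirDeriv_sum_smul, hessianForm]
  refine Finset.sum_congr rfl fun i _ => ?_
  rw [dirDeriv_sum _ fun j => by fun_prop, Finset.mul_sum]
  refine Finset.sum_congr rfl fun j _ => ?_
  rw [dirDeriv_const_mul _ _ (by fun_prop)]
  ring

theorem gradInner_gradInner_left (hφ : ContDiffAt ℝ ∞ φ p) (hv : ContDiffAt ℝ ∞ v p) :
    gradInner e (gradInner e φ v) v p =
      hessianForm e φ v p + 1 / 2 * gradInner e (gradInner e v v) φ p := by
  have hessian_part : ∑ j, gradInner e (dirDeriv (e j) φ) v p * dirDeriv (e j) v p =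
      hessianForm e φ v p := by
    rw [hessianForm, Finset.sum_comm]
    simp only [gradInner, Finset.sum_mul]
  have gradient_part : ∑ j, gradInner e φ (dirDeriv (e j) v) p * dirDeriv (e j) v p =
      1 / 2 * gradInner e (gradInner e v v) φ p := by
    have half_derivative (i : ι) : dirDeriv (e i) (gradInner e v v) p =
        2 * ∑ j, dirDeriv (e i) (dirDeriv (e j) v) p * dirDeriv (e j) v p := by
      rw [dirDeriv_gradInner e _ hv hv, gradInner_comm e v, ← two_mul]
      simp only [gradInner, dirDeriv_comm (e i) _ hv]
    rw [gradInner, Finset.mul_sum]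
    simp only [half_derivative, gradInner, Finset.sum_mul, Finset.mul_sum]
    rw [Finset.sum_comm]
    exact Finset.sum_congr rfl fun _ _ => Finset.sum_congr rfl fun _ _ => by ring
  rw [← hessian_part, ← gradient_part, ← Finset.sum_add_distrib, gradInner]
  simp only [dirDeriv_gradInner e _ hφ hv, add_mul]

theorem gradInner_gradInner_self (hφ : ContDiffAt ℝ ∞ φ p) :
    gradInner e (gradInner e φ φ) φ p = 2 * hessianForm e φ φ p := by
  linarith [gradInner_gradInner_left e hφ hφ]

theorem sum_dirDeriv_mul_dirDeriv (hf : ContDiffAt ℝ ∞ f p) (hg : ContDiffAt ℝ ∞ g p) :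
    ∑ i, dirDeriv (e i) (fun q => f q * dirDeriv (e i) g q) p =
      gradInner e f g p + f p * laplacianAlong e g p := by
  have product_rule (i : ι) : dirDeriv (e i) (fun q => f q * dirDeriv (e i) g q) p =
      dirDeriv (e i) f p * dirDeriv (e i) g p + f p * dirDeriv (e i) (dirDeriv (e i) g) p := by
    rw [dirDeriv_mul _ (by fun_prop) (by fun_prop)]
    ring
  simp only [product_rule, gradInner, laplacianAlong, Finset.sum_add_distrib, Finset.mul_sum]

theorem gradInner_exp_mul_right (f : V → ℝ) (hφ : DifferentiableAt ℝ φ p)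
    (hu : DifferentiableAt ℝ u p) : gradInner e f (fun q => exp (φ q) * u q) p =
      exp (φ p) * (gradInner e f u p + gradInner e f φ p * u p) := by
  simp only [gradInner_comm e f, gradInner_eq_dirDeriv, dirDeriv_exp_mul _ hφ hu]

theorem laplacianAlong_exp_mul (hφ : ContDiffAt ℝ ∞ φ p) (hu : ContDiffAt ℝ ∞ u p) :
    laplacianAlong e (fun q => exp (φ q) * u q) p = exp (φ p) * (laplacianAlong e u p +
      2 * gradInner e φ u p + (laplacianAlong e φ p + gradInner e φ φ p) * u p) := by
  have second_derivative (i : ι) :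
      dirDeriv (e i) (dirDeriv (e i) fun q => exp (φ q) * u q) p =
        exp (φ p) * (dirDeriv (e i) (dirDeriv (e i) u) p +
          2 * (dirDeriv (e i) φ p * dirDeriv (e i) u p) +
          (dirDeriv (e i) (dirDeriv (e i) φ) p + dirDeriv (e i) φ p * dirDeriv (e i) φ p) *
            u p) := by
    have first_derivative : dirDeriv (e i) (fun q => exp (φ q) * u q) =ᶠ[𝓝 p]
        fun q => exp (φ q) * (dirDeriv (e i) u q + dirDeriv (e i) φ q * u q) := by
      filter_upwards [eventually_differentiableAt_of_contDiffAt_infty hφ,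
        eventually_differentiableAt_of_contDiffAt_infty hu] with q hφq huq
      exact dirDeriv_exp_mul _ hφq huq
    rw [dirDeriv_congr first_derivative, dirDeriv_exp_mul _ (by fun_prop) (by fun_prop),
      dirDeriv_add _ (by fun_prop) (by fun_prop), dirDeriv_mul _ (by fun_prop) (by fun_prop)]
    ring
  simp only [laplacianAlong, gradInner, second_derivative, Finset.sum_add_distrib, Finset.mul_sum,
    Finset.sum_mul, mul_add, add_mul]

end CarreDuChamp

section IntegrationByParts

variable {V ι : Type*} [NormedAddCommGroup V] [NormedSpace ℝ V] [Fintype ι] (e : ι → V) (τ : V)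
  {f g h φ u v W : V → ℝ} {K : Set V} {p : V}

theorem contDiff_of_contDiffAt_of_eq_zero (hK : IsClosed K) (hg : ∀ p ∈ K, ContDiffAt ℝ ∞ g p)
    (hg₀ : ∀ p ∉ K, g p = 0) : ContDiff ℝ ∞ g := by
  refine contDiff_iff_contDiffAt.2 fun p => ?_
  by_cases hp : p ∈ K
  · exact hg p hp
  · exact contDiffAt_const.congr_of_eventuallyEq
      (eventually_of_mem (hK.isOpen_compl.mem_nhds hp) hg₀)

/-- The quadratic form in `(v, ∇v)` that represents the commutator of the symmetric operator
`Δ + W` and the operator `∂_τ - 2 ⟪∇φ, ∇ ·⟫ - h` after integration by parts. -/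
noncomputable def commutatorForm (φ W h v : V → ℝ) (p : V) : ℝ :=
  4 * hessianForm e φ v p + 2 * (h p - laplacianAlong e φ p) * gradInner e v v p +
    v p ^ 2 * (-laplacianAlong e h p - dirDeriv τ W p + 2 * gradInner e W φ p -
      2 * W p * (h p - laplacianAlong e φ p))

@[fun_prop]
theorem contDiffAt_commutatorForm (hφ : ContDiffAt ℝ ∞ φ p) (hW : ContDiffAt ℝ ∞ W p)
    (hh : ContDiffAt ℝ ∞ h p) (hv : ContDiffAt ℝ ∞ v p) :
    ContDiffAt ℝ ∞ (commutatorForm e τ φ W h v) p := by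
  unfold commutatorForm
  fun_prop

theorem commutator_eq_divergence (hφ : ContDiffAt ℝ ∞ φ p)
    (hW : ContDiffAt ℝ ∞ W p) (hh : ContDiffAt ℝ ∞ h p) (hv : ContDiffAt ℝ ∞ v p) :
    2 * (laplacianAlong e v p + W p * v p) *
        (dirDeriv τ v p - 2 * gradInner e φ v p - h p * v p) - commutatorForm e τ φ W h v p =
      (gradInner e (fun q => 2 * (dirDeriv τ v q - 2 * gradInner e φ v q - h q * v q)) v p +
        2 * (dirDeriv τ v p - 2 * gradInner e φ v p - h p * v p) * laplacianAlong e v p) +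
      (gradInner e (fun q => -2 * (W q * (v q * v q) - gradInner e v v q)) φ p +
        -2 * (W p * (v p * v p) - gradInner e v v p) * laplacianAlong e φ p) +
      (gradInner e (fun q => v q * v q) h p + v p * v p * laplacianAlong e h p) +
      dirDeriv τ (fun q => W q * (v q * v q) - gradInner e v v q) p := by
  simp (disch := fun_prop) only [gradInner_const_mul_left, gradInner_sub_left, gradInner_mul_left,
    dirDeriv_sub, dirDeriv_mul, dirDeriv_gradInner, gradInner_gradInner_left e hφ hv,
    gradInner_comm e v, commutatorForm]
  ring

/-- The quadratic form in `(v, ∇v)` bounded by the weighted `L²` norm of `∂_τ u + Δu`, where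
`v = e^φ u`. The function `h` is a free multiplier; `h = Δφ` is the splitting of the conjugated
operator into its symmetric and antisymmetric parts. -/
noncomputable def carlemanForm (φ h v : V → ℝ) (p : V) : ℝ :=
  4 * hessianForm e φ v p + 2 * (h p - laplacianAlong e φ p) * gradInner e v v p +
    v p ^ 2 * (-laplacianAlong e h p + dirDeriv τ (dirDeriv τ φ) p -
      4 * gradInner e φ (dirDeriv τ φ) p + 4 * hessianForm e φ φ p -
      2 * (gradInner e φ φ p - dirDeriv τ φ p) * (h p - laplacianAlong e φ p) -
      (h p - laplacianAlong e φ p) ^ 2)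

@[fun_prop]
theorem contDiffAt_carlemanForm (hφ : ContDiffAt ℝ ∞ φ p) (hh : ContDiffAt ℝ ∞ h p)
    (hv : ContDiffAt ℝ ∞ v p) : ContDiffAt ℝ ∞ (carlemanForm e τ φ h v) p := by
  unfold carlemanForm
  fun_prop

theorem carlemanForm_eq_commutatorForm_sub (h v : V → ℝ) (hφ : ContDiffAt ℝ ∞ φ p) :
    carlemanForm e τ φ h v p =
      commutatorForm e τ φ (fun q => gradInner e φ φ q - dirDeriv τ φ q) h v p -
        (h p - laplacianAlong e φ p) ^ 2 * v p ^ 2 := by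
  simp (disch := fun_prop) only [carlemanForm, commutatorForm, dirDeriv_sub, gradInner_sub_left,
    dirDeriv_gradInner, gradInner_gradInner_self, gradInner_comm e (dirDeriv τ φ)]
  ring

theorem exp_mul_heat_eq_conjugate (hφ : ContDiffAt ℝ ∞ φ p) (hu : ContDiffAt ℝ ∞ u p)
    (hv : v = fun q => exp (φ q) * u q) :
    exp (φ p) * (dirDeriv τ u p + laplacianAlong e u p) =
      (laplacianAlong e v p + (gradInner e φ φ p - dirDeriv τ φ p) * v p) +
        (dirDeriv τ v p - 2 * gradInner e φ v p - laplacianAlong e φ p * v p) := by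
  rw [hv, laplacianAlong_exp_mul e hφ hu, dirDeriv_exp_mul τ (by fun_prop) (by fun_prop),
    gradInner_exp_mul_right e φ (by fun_prop) (by fun_prop)]
  ring

theorem carlemanForm_add_commutator_le (hφ : ContDiffAt ℝ ∞ φ p) (hu : ContDiffAt ℝ ∞ u p)
    (hv : v = fun q => exp (φ q) * u q) :
    carlemanForm e τ φ h v p +
      (2 * (laplacianAlong e v p + (gradInner e φ φ p - dirDeriv τ φ p) * v p) *
        (dirDeriv τ v p - 2 * gradInner e φ v p - h p * v p) -
        commutatorForm e τ φ (fun q => gradInner e φ φ q - dirDeriv τ φ q) h v p) ≤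
      (exp (φ p) * (dirDeriv τ u p + laplacianAlong e u p)) ^ 2 := by
  rw [carlemanForm_eq_commutatorForm_sub e τ h v hφ, exp_mul_heat_eq_conjugate e τ hφ hu hv]
  set S := laplacianAlong e v p + (gradInner e φ φ p - dirDeriv τ φ p) * v p
  set A := dirDeriv τ v p - 2 * gradInner e φ v p
  set k := h p - laplacianAlong e φ p
  have split_squares : (S + (A - laplacianAlong e φ p * v p)) ^ 2 =
      2 * S * (A - h p * v p) - k ^ 2 * v p ^ 2 + (S + k * v p) ^ 2 +
        (A - h p * v p + k * v p) ^ 2 := by ring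
  rw [split_squares]
  linarith [sq_nonneg (S + k * v p), sq_nonneg (A - h p * v p + k * v p)]

theorem exp_mul_gradInner_self_le (hφ : DifferentiableAt ℝ φ p) (hu : DifferentiableAt ℝ u p)
    (hv : v = fun q => exp (φ q) * u q) :
    exp (2 * φ p) * gradInner e u u p ≤
      2 * gradInner e v v p + 2 * gradInner e φ φ p * v p ^ 2 := by
  have term_le (i : ι) : exp (2 * φ p) * (dirDeriv (e i) u p * dirDeriv (e i) u p) ≤
      2 * (dirDeriv (e i) v p * dirDeriv (e i) v p) +
        2 * (dirDeriv (e i) φ p * dirDeriv (e i) φ p) * v p ^ 2 := by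
    rw [hv, dirDeriv_exp_mul _ hφ hu, two_mul (φ p), exp_add]
    nlinarith [sq_nonneg (exp (φ p) * (dirDeriv (e i) u p + 2 * (dirDeriv (e i) φ p * u p)))]
  simpa only [gradInner, Finset.mul_sum, Finset.sum_mul, Finset.sum_add_distrib] using
    Finset.sum_le_sum fun i (_ : i ∈ Finset.univ) => term_le i

variable [MeasurableSpace V] [BorelSpace V] {μ : Measure V}

theorem integrableOn_of_contDiffAt [IsFiniteMeasureOnCompacts μ] (hK : IsCompact K)
    (hg : ∀ p ∈ K, ContDiffAt ℝ ∞ g p) : IntegrableOn g K μ :=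
  ContinuousOn.integrableOn_compact hK fun p hp => (hg p hp).continuousAt.continuousWithinAt

variable [FiniteDimensional ℝ V] [μ.IsAddHaarMeasure]

theorem setIntegral_dirDeriv_eq_zero (hK : IsCompact K) (hg : ∀ p ∈ K, ContDiffAt ℝ ∞ g p)
    (hg₀ : ∀ p ∉ K, g p = 0) (w : V) : ∫ p in K, dirDeriv w g p ∂μ = 0 := by
  have hg_smooth := contDiff_of_contDiffAt_of_eq_zero hK.isClosed hg hg₀
  have hg'₀ : ∀ p ∉ K, dirDeriv w g p = 0 := fun p hp =>
    dirDeriv_eq_zero_of_notMem hK.isClosed hg₀ hp w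
  have hg'_integrable : Integrable (dirDeriv w g) μ :=
    (integrableOn_iff_integrable_of_support_subset (Function.support_subset_iff'.2 hg'₀)).1
      (integrableOn_of_contDiffAt hK fun p hp => by fun_prop (disch := assumption))
  have hg_integrable : Integrable g μ :=
    (integrableOn_iff_integrable_of_support_subset (Function.support_subset_iff'.2 hg₀)).1
      (integrableOn_of_contDiffAt hK hg)
  rw [setIntegral_eq_integral_of_forall_compl_eq_zero hg'₀]
  unfold dirDeriv at hg'_integrable ⊢
  simpa using integral_mul_fderiv_eq_neg_fderiv_mul_of_integrable (μ := μ) (𝕜 := ℝ)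
    (f := fun _ : V => (1 : ℝ)) (g := g) (v := w) (by simp) (by simpa using hg'_integrable)
    (by simpa using hg_integrable) (fun p _ => differentiableAt_const _)
    (fun p _ => differentiableAt_of_contDiffAt_infty hg_smooth.contDiffAt)

theorem setIntegral_gradInner_add_mul_laplacianAlong (hK : IsCompact K)
    (hf : ∀ p ∈ K, ContDiffAt ℝ ∞ f p) (hf₀ : ∀ p ∉ K, f p = 0)
    (hg : ∀ p ∈ K, ContDiffAt ℝ ∞ g p) :
    ∫ p in K, (gradInner e f g p + f p * laplacianAlong e g p) ∂μ = 0 := by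
  have product_smooth (i : ι) : ∀ p ∈ K, ContDiffAt ℝ ∞ (fun q => f q * dirDeriv (e i) g q) p :=
    fun p hp => by fun_prop (disch := assumption)
  calc ∫ p in K, (gradInner e f g p + f p * laplacianAlong e g p) ∂μ
      = ∫ p in K, ∑ i, dirDeriv (e i) (fun q => f q * dirDeriv (e i) g q) p ∂μ :=
        setIntegral_congr_fun hK.measurableSet fun p hp =>
          (sum_dirDeriv_mul_dirDeriv e (hf p hp) (hg p hp)).symm
    _ = ∑ i, ∫ p in K, dirDeriv (e i) (fun q => f q * dirDeriv (e i) g q) p ∂μ :=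
        integral_finsetSum _ fun i _ => integrableOn_of_contDiffAt hK fun p hp =>
          contDiffAt_dirDeriv _ (product_smooth i p hp)
    _ = 0 := Finset.sum_eq_zero fun i _ =>
        setIntegral_dirDeriv_eq_zero hK (product_smooth i) (fun p hp => by simp [hf₀ p hp]) _

theorem setIntegral_commutator_eq_zero (hK : IsCompact K) (hφ : ∀ p ∈ K, ContDiffAt ℝ ∞ φ p)
    (hW : ∀ p ∈ K, ContDiffAt ℝ ∞ W p) (hh : ∀ p ∈ K, ContDiffAt ℝ ∞ h p)
    (hv : ∀ p ∈ K, ContDiffAt ℝ ∞ v p) (hv₀ : ∀ p ∉ K, v p = 0) :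
    ∫ p in K, (2 * (laplacianAlong e v p + W p * v p) *
      (dirDeriv τ v p - 2 * gradInner e φ v p - h p * v p) - commutatorForm e τ φ W h v p) ∂μ =
      0 := by
  have dirDeriv_zero {p : V} (hp : p ∉ K) (w : V) : dirDeriv w v p = 0 :=
    dirDeriv_eq_zero_of_notMem hK.isClosed hv₀ hp w
  have gradInner_zero {p : V} (hp : p ∉ K) (f : V → ℝ) : gradInner e f v p = 0 := by
    simp [gradInner, dirDeriv_zero hp]
  rw [setIntegral_congr_fun hK.measurableSet fun p hp =>
      commutator_eq_divergence e τ (hφ p hp) (hW p hp) (hh p hp) (hv p hp),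
    integral_add, integral_add, integral_add,
    setIntegral_gradInner_add_mul_laplacianAlong e hK _ _ hv,
    setIntegral_gradInner_add_mul_laplacianAlong e hK _ _ hφ,
    setIntegral_gradInner_add_mul_laplacianAlong e hK _ _ hh,
    setIntegral_dirDeriv_eq_zero hK, add_zero, add_zero, add_zero]
  all_goals first
    | exact integrableOn_of_contDiffAt hK fun p hp => by fun_prop (disch := assumption)
    | exact fun p hp => by fun_prop (disch := assumption)
    | exact fun p hp => by simp [hv₀ p hp, dirDeriv_zero hp, gradInner_zero hp]

theorem setIntegral_carlemanForm_le (hK : IsCompact K) (hφ : ∀ p ∈ K, ContDiffAt ℝ ∞ φ p)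
    (hh : ∀ p ∈ K, ContDiffAt ℝ ∞ h p) (hu : ∀ p ∈ K, ContDiffAt ℝ ∞ u p)
    (hu₀ : ∀ p ∉ K, u p = 0) :
    ∫ p in K, carlemanForm e τ φ h (fun q => exp (φ q) * u q) p ∂μ ≤
      ∫ p in K, (exp (φ p) * (dirDeriv τ u p + laplacianAlong e u p)) ^ 2 ∂μ := by
  set v : V → ℝ := fun q => exp (φ q) * u q with hv_def
  have hv : ∀ p ∈ K, ContDiffAt ℝ ∞ v p := fun p hp => by fun_prop (disch := assumption)
  have hW : ∀ p ∈ K, ContDiffAt ℝ ∞ (fun q => gradInner e φ φ q - dirDeriv τ φ q) p :=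
    fun p hp => by fun_prop (disch := assumption)
  have commutator_zero := setIntegral_commutator_eq_zero e τ (μ := μ) hK hφ hW hh hv
    fun p hp => by simp [hv_def, hu₀ p hp]
  rw [← add_zero (∫ p in K, _ ∂μ), ← commutator_zero, ← integral_add]
  · refine setIntegral_mono_on ?_ ?_ hK.measurableSet fun p hp =>
      carlemanForm_add_commutator_le e τ (hφ p hp) (hu p hp) hv_def
    all_goals exact integrableOn_of_contDiffAt hK fun p hp => by fun_prop (disch := assumption)
  all_goals exact integrableOn_of_contDiffAt hK fun p hp => by fun_prop (disch := assumption)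

end IntegrationByParts

section Separation

variable {E ι : Type*} [NormedAddCommGroup E] [NormedSpace ℝ E] [Fintype ι] (e : ι → E)
  {A B : E → ℝ} {l l' m m' : ℝ → ℝ} {x : E} {t : ℝ}

/-- The vectors `e i`, viewed as directions in space-time. -/
def spatial (i : ι) : E × ℝ := (e i, 0)

/-- The space-time function `(x, t) ↦ l t * A x + m t`. -/
def separated (l : ℝ → ℝ) (A : E → ℝ) (m : ℝ → ℝ) (p : E × ℝ) : ℝ := l p.2 * A p.1 + m p.2

theorem contDiffAt_separated (hl : ContDiffAt ℝ ∞ l t) (hA : ContDiffAt ℝ ∞ A x)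
    (hm : ContDiffAt ℝ ∞ m t) : ContDiffAt ℝ ∞ (separated l A m) (x, t) :=
  ((hl.comp (x, t) contDiffAt_snd).mul (hA.comp (x, t) contDiffAt_fst)).add
    (hm.comp (x, t) contDiffAt_snd)

theorem dirDeriv_separated (hl : DifferentiableAt ℝ l t) (hA : DifferentiableAt ℝ A x)
    (hm : DifferentiableAt ℝ m t) (w : E) (s : ℝ) :
    dirDeriv (w, s) (separated l A m) (x, t) =
      l t * dirDeriv w A x + s * (deriv l t * A x + deriv m t) := by
  have hfst : HasFDerivAt Prod.fst (ContinuousLinearMap.fst ℝ E ℝ) (x, t) := hasFDerivAt_fst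
  have hsnd : HasFDerivAt Prod.snd (ContinuousLinearMap.snd ℝ E ℝ) (x, t) := hasFDerivAt_snd
  have hasFDerivAt_separated : HasFDerivAt (separated l A m) _ (x, t) :=
    ((hl.hasDerivAt.comp_hasFDerivAt (x, t) hsnd).mul (hA.hasFDerivAt.comp (x, t) hfst)).add
      (hm.hasDerivAt.comp_hasFDerivAt (x, t) hsnd)
  rw [dirDeriv, hasFDerivAt_separated.fderiv]
  simp [dirDeriv]
  ring

theorem dirDeriv_space_separated (hl : DifferentiableAt ℝ l t) (hA : DifferentiableAt ℝ A x)
    (hm : DifferentiableAt ℝ m t) (w : E) :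
    dirDeriv (w, 0) (separated l A m) (x, t) = l t * dirDeriv w A x := by
  rw [dirDeriv_separated hl hA hm, zero_mul, add_zero]

theorem dirDeriv_time_separated (hl : DifferentiableAt ℝ l t) (hA : DifferentiableAt ℝ A x)
    (hm : DifferentiableAt ℝ m t) :
    dirDeriv (0, 1) (separated l A m) (x, t) = deriv l t * A x + deriv m t := by
  rw [dirDeriv_separated hl hA hm]
  simp [dirDeriv]

theorem dirDeriv_space_separated_eventuallyEq (hl : ContDiffAt ℝ ∞ l t) (hA : ContDiffAt ℝ ∞ A x)
    (hm : ContDiffAt ℝ ∞ m t) (w : E) :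
    dirDeriv (w, 0) (separated l A m) =ᶠ[𝓝 (x, t)] separated l (dirDeriv w A) 0 := by
  filter_upwards [(eventually_differentiableAt_of_contDiffAt_infty hA).prod_nhds
    ((eventually_differentiableAt_of_contDiffAt_infty hl).and
      (eventually_differentiableAt_of_contDiffAt_infty hm))] with p ⟨hAp, hlp, hmp⟩
  simpa [separated] using dirDeriv_space_separated hlp hAp hmp w

theorem dirDeriv_time_separated_eventuallyEq (hl : ContDiffAt ℝ ∞ l t) (hA : ContDiffAt ℝ ∞ A x)
    (hm : ContDiffAt ℝ ∞ m t) :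
    dirDeriv (0, 1) (separated l A m) =ᶠ[𝓝 (x, t)] separated (deriv l) A (deriv m) := by
  filter_upwards [(eventually_differentiableAt_of_contDiffAt_infty hA).prod_nhds
    ((eventually_differentiableAt_of_contDiffAt_infty hl).and
      (eventually_differentiableAt_of_contDiffAt_infty hm))] with p ⟨hAp, hlp, hmp⟩
  exact dirDeriv_time_separated hlp hAp hmp

theorem dirDeriv_dirDeriv_space_separated (hl : ContDiffAt ℝ ∞ l t) (hA : ContDiffAt ℝ ∞ A x)
    (hm : ContDiffAt ℝ ∞ m t) (w z : E) :
    dirDeriv (w, 0) (dirDeriv (z, 0) (separated l A m)) (x, t) =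
      l t * dirDeriv w (dirDeriv z A) x := by
  rw [dirDeriv_congr (dirDeriv_space_separated_eventuallyEq hl hA hm z),
    dirDeriv_space_separated (m := 0) (by fun_prop) (by fun_prop) (differentiableAt_const 0)]

theorem dirDeriv_dirDeriv_time_separated (hl : ContDiffAt ℝ ∞ l t) (hA : ContDiffAt ℝ ∞ A x)
    (hm : ContDiffAt ℝ ∞ m t) :
    dirDeriv (0, 1) (dirDeriv (0, 1) (separated l A m)) (x, t) =
      deriv (deriv l) t * A x + deriv (deriv m) t := by
  rw [dirDeriv_congr (dirDeriv_time_separated_eventuallyEq hl hA hm),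
    dirDeriv_time_separated (by fun_prop) (by fun_prop) (by fun_prop)]

theorem laplacianAlong_spatial_separated (hl : ContDiffAt ℝ ∞ l t) (hA : ContDiffAt ℝ ∞ A x)
    (hm : ContDiffAt ℝ ∞ m t) :
    laplacianAlong (spatial e) (separated l A m) (x, t) = l t * laplacianAlong e A x := by
  simp only [laplacianAlong, spatial, dirDeriv_dirDeriv_space_separated hl hA hm, Finset.mul_sum]

theorem gradInner_spatial_separated (hl : DifferentiableAt ℝ l t) (hA : DifferentiableAt ℝ A x)
    (hm : DifferentiableAt ℝ m t) (hl' : DifferentiableAt ℝ l' t) (hB : DifferentiableAt ℝ B x)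
    (hm' : DifferentiableAt ℝ m' t) :
    gradInner (spatial e) (separated l A m) (separated l' B m') (x, t) =
      l t * l' t * gradInner e A B x := by
  simp only [gradInner, spatial, dirDeriv_space_separated, hl, hA, hm, hl', hB, hm',
    Finset.mul_sum]
  exact Finset.sum_congr rfl fun _ _ => by ring

/-- The spatial gradient of `v : E × ℝ → ℝ` when `e` is an orthonormal basis of `E`. -/
noncomputable def spatialGrad (v : E × ℝ → ℝ) (p : E × ℝ) : E :=
  ∑ i, dirDeriv (spatial e i) v p • e i

theorem hessianForm_spatial_separated (hl : ContDiffAt ℝ ∞ l t) (hA : ContDiffAt ℝ ∞ A x)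
    (hm : ContDiffAt ℝ ∞ m t) (v : E × ℝ → ℝ) :
    hessianForm (spatial e) (separated l A m) v (x, t) =
      l t * dirDeriv (spatialGrad e v (x, t)) (dirDeriv (spatialGrad e v (x, t)) A) x := by
  have spatialGrad_lift : ∑ i, dirDeriv (spatial e i) v (x, t) • spatial e i =
      (spatialGrad e v (x, t), 0) := by
    ext <;> simp [spatialGrad, spatial, Prod.fst_sum, Prod.snd_sum]
  rw [hessianForm_eq_dirDeriv_dirDeriv _ _ (contDiffAt_separated hl hA hm), spatialGrad_lift,
    dirDeriv_dirDeriv_space_separated hl hA hm]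

theorem hessianForm_spatial_separated_self (hl : ContDiffAt ℝ ∞ l t) (hA : ContDiffAt ℝ ∞ A x)
    (hm : ContDiffAt ℝ ∞ m t) :
    hessianForm (spatial e) (separated l A m) (separated l A m) (x, t) =
      l t ^ 3 * hessianForm e A A x := by
  simp (disch := fun_prop) only [hessianForm, spatial, dirDeriv_dirDeriv_space_separated hl hA hm,
    dirDeriv_space_separated, Finset.mul_sum]
  exact Finset.sum_congr rfl fun _ _ => Finset.sum_congr rfl fun _ _ => by ring

theorem gradInner_time_separated (hl : ContDiffAt ℝ ∞ l t) (hA : ContDiffAt ℝ ∞ A x)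
    (hm : ContDiffAt ℝ ∞ m t) :
    gradInner (spatial e) (separated l A m) (dirDeriv (0, 1) (separated l A m)) (x, t) =
      l t * deriv l t * gradInner e A A x := by
  rw [← gradInner_spatial_separated e (m := m) (m' := deriv m) (by fun_prop) (by fun_prop)
    (by fun_prop) (by fun_prop) (by fun_prop) (by fun_prop)]
  simp only [gradInner_comm _ (separated l A m), gradInner_eq_dirDeriv,
    dirDeriv_congr (dirDeriv_time_separated_eventuallyEq hl hA hm)]

theorem carlemanForm_separated (hl : ContDiffAt ℝ ∞ l t) (hA : ContDiffAt ℝ ∞ A x)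
    (hm : ContDiffAt ℝ ∞ m t) (hB : ContDiffAt ℝ ∞ B x) (hm' : ContDiffAt ℝ ∞ m' t)
    (v : E × ℝ → ℝ) {k : ℝ} (hk : k = l t * (B x - laplacianAlong e A x) + m' t) :
    carlemanForm (spatial e) (0, 1) (separated l A m) (separated l B m') v (x, t) =
      4 * (l t * dirDeriv (spatialGrad e v (x, t)) (dirDeriv (spatialGrad e v (x, t)) A) x) +
        2 * k * gradInner (spatial e) v v (x, t) +
      v (x, t) ^ 2 * (-(l t * laplacianAlong e B x) +
        (deriv (deriv l) t * A x + deriv (deriv m) t) -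
        4 * (l t * deriv l t * gradInner e A A x) + 4 * (l t ^ 3 * hessianForm e A A x) -
        2 * (l t ^ 2 * gradInner e A A x - (deriv l t * A x + deriv m t)) * k - k ^ 2) := by
  have multiplier_eq : separated l B m' (x, t) -
      laplacianAlong (spatial e) (separated l A m) (x, t) = k := by
    rw [hk, laplacianAlong_spatial_separated e hl hA hm, separated]
    ring
  rw [carlemanForm, multiplier_eq, hessianForm_spatial_separated e hl hA hm,
    laplacianAlong_spatial_separated e hl hB hm', dirDeriv_dirDeriv_time_separated hl hA hm,
    gradInner_time_separated e hl hA hm, hessianForm_spatial_separated_self e hl hA hm,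
    gradInner_spatial_separated e (by fun_prop) (by fun_prop) (by fun_prop) (by fun_prop)
      (by fun_prop) (by fun_prop),
    dirDeriv_time_separated (by fun_prop) (by fun_prop) (by fun_prop)]
  ring

end Separation

section ConePower

variable {E ι : Type*} [NormedAddCommGroup E] [InnerProductSpace ℝ E] [Fintype ι]
  {ν x : E} {β c b : ℝ}

/-- The function `c ⟪ν, x⟫ ^ β - b ‖x‖ ^ β`. The spatial Carleman weight, its Laplacian and the
multiplier are all of this form. -/
noncomputable def conePower (ν : E) (β c b : ℝ) (x : E) : ℝ := c * ⟪ν, x⟫_ℝ ^ β - b * ‖x‖ ^ β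

/-- The gradient of `conePower ν β c b`. -/
noncomputable def conePowerGrad (ν : E) (β c b : ℝ) (x : E) : E :=
  (β * c * ⟪ν, x⟫_ℝ ^ (β - 1)) • ν - (β * b * ‖x‖ ^ (β - 2)) • x

theorem ne_zero_of_inner_pos (hx : 0 < ⟪ν, x⟫_ℝ) : x ≠ 0 := by
  rintro rfl
  simp at hx

theorem eventually_inner_pos (hx : 0 < ⟪ν, x⟫_ℝ) : ∀ᶠ y in 𝓝 x, 0 < ⟪ν, y⟫_ℝ :=
  (innerSL ℝ ν).continuous.continuousAt.eventually_const_lt hx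

theorem contDiffAt_inner_rpow (hx : 0 < ⟪ν, x⟫_ℝ) (s : ℝ) :
    ContDiffAt ℝ ∞ (fun y => ⟪ν, y⟫_ℝ ^ s) x :=
  (innerSL ℝ ν).contDiff.contDiffAt.rpow_const_of_ne hx.ne'

theorem contDiffAt_norm_rpow (hx : x ≠ 0) (s : ℝ) : ContDiffAt ℝ ∞ (fun y => ‖y‖ ^ s) x :=
  (contDiffAt_norm ℝ hx).rpow_const_of_ne (norm_ne_zero_iff.2 hx)

theorem dirDeriv_inner_rpow (hx : 0 < ⟪ν, x⟫_ℝ) (s : ℝ) (w : E) :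
    dirDeriv w (fun y => ⟪ν, y⟫_ℝ ^ s) x = s * ⟪ν, x⟫_ℝ ^ (s - 1) * ⟪ν, w⟫_ℝ := by
  have h : HasFDerivAt (fun y => ⟪ν, y⟫_ℝ ^ s) _ x :=
    (innerSL ℝ ν).hasFDerivAt.rpow_const (Or.inl hx.ne')
  rw [dirDeriv, h.fderiv]
  simp

theorem dirDeriv_norm_rpow (hx : x ≠ 0) (s : ℝ) (w : E) :
    dirDeriv w (fun y => ‖y‖ ^ s) x = s * ‖x‖ ^ (s - 2) * ⟪x, w⟫_ℝ := by
  have hx₀ : 0 < ‖x‖ := norm_pos_iff.2 hx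
  have norm_eq : (fun y : E => ‖y‖ ^ s) = fun y => (‖y‖ ^ 2) ^ (s / 2) := funext fun y => by
    rw [← rpow_natCast_mul (norm_nonneg y), Nat.cast_ofNat, mul_div_cancel₀ s two_ne_zero]
  rw [norm_eq, dirDeriv, ((hasStrictFDerivAt_norm_sq x).hasFDerivAt.rpow_const (p := s / 2)
    (Or.inl (by positivity))).fderiv, ← rpow_natCast_mul hx₀.le]
  simp
  ring_nf

theorem contDiffAt_conePower (hx : 0 < ⟪ν, x⟫_ℝ) : ContDiffAt ℝ ∞ (conePower ν β c b) x :=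
  (contDiffAt_const.mul (contDiffAt_inner_rpow hx β)).sub
    (contDiffAt_const.mul (contDiffAt_norm_rpow (ne_zero_of_inner_pos hx) β))

theorem dirDeriv_conePower (hx : 0 < ⟪ν, x⟫_ℝ) (w : E) :
    dirDeriv w (conePower ν β c b) x = ⟪conePowerGrad ν β c b x, w⟫_ℝ := by
  have hx₀ := ne_zero_of_inner_pos hx
  have h₁ := differentiableAt_of_contDiffAt_infty (contDiffAt_inner_rpow hx β)
  have h₂ := differentiableAt_of_contDiffAt_infty (contDiffAt_norm_rpow hx₀ β)
  unfold conePower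
  rw [dirDeriv_sub _ (h₁.const_mul c) (h₂.const_mul b), dirDeriv_const_mul _ _ h₁,
    dirDeriv_const_mul _ _ h₂, dirDeriv_inner_rpow hx, dirDeriv_norm_rpow hx₀, conePowerGrad,
    inner_sub_left, real_inner_smul_left, real_inner_smul_left]
  ring

theorem dirDeriv_dirDeriv_conePower (hx : 0 < ⟪ν, x⟫_ℝ) (w : E) :
    dirDeriv w (dirDeriv w (conePower ν β c b)) x =
      β * (β - 1) * c * ⟪ν, x⟫_ℝ ^ (β - 2) * ⟪ν, w⟫_ℝ ^ 2 -
        β * b * (‖x‖ ^ (β - 2) * ‖w‖ ^ 2 + (β - 2) * ‖x‖ ^ (β - 4) * ⟪x, w⟫_ℝ ^ 2) := by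
  have hx₀ := ne_zero_of_inner_pos hx
  have first_derivative : dirDeriv w (conePower ν β c b) =ᶠ[𝓝 x] fun y =>
      β * c * ⟪ν, w⟫_ℝ * ⟪ν, y⟫_ℝ ^ (β - 1) - β * b * (‖y‖ ^ (β - 2) * ⟪y, w⟫_ℝ) := by
    filter_upwards [eventually_inner_pos hx] with y hy
    rw [dirDeriv_conePower hy, conePowerGrad, inner_sub_left, real_inner_smul_left,
      real_inner_smul_left]
    ring
  have dirDeriv_inner_self : dirDeriv w (fun y => ⟪y, w⟫_ℝ) x = ‖w‖ ^ 2 := by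
    simp [dirDeriv, fderiv_inner_apply]
  have h₁ := differentiableAt_of_contDiffAt_infty (contDiffAt_inner_rpow hx (β - 1))
  have h₂ := differentiableAt_of_contDiffAt_infty (contDiffAt_norm_rpow hx₀ (β - 2))
  have h₃ : DifferentiableAt ℝ (fun y => ⟪y, w⟫_ℝ) x :=
    differentiableAt_id.inner ℝ (differentiableAt_const w)
  rw [dirDeriv_congr first_derivative,
    dirDeriv_sub _ (h₁.const_mul _) ((h₂.fun_mul h₃).const_mul _), dirDeriv_const_mul _ _ h₁,
    dirDeriv_const_mul _ _ (h₂.fun_mul h₃), dirDeriv_mul _ h₂ h₃, dirDeriv_inner_rpow hx,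
    dirDeriv_norm_rpow hx₀, dirDeriv_inner_self]
  ring_nf

variable (B : OrthonormalBasis ι ℝ E)

theorem sum_dirDeriv_smul_eq_conePowerGrad (hx : 0 < ⟪ν, x⟫_ℝ) :
    ∑ i, dirDeriv (B i) (conePower ν β c b) x • B i = conePowerGrad ν β c b x := by
  simp only [dirDeriv_conePower hx, real_inner_comm (B _), B.sum_repr']

theorem gradInner_conePower_self (hx : 0 < ⟪ν, x⟫_ℝ) :
    gradInner B (conePower ν β c b) (conePower ν β c b) x = ‖conePowerGrad ν β c b x‖ ^ 2 := by
  simp only [gradInner, dirDeriv_conePower hx, ← pow_two, B.sum_sq_inner_left]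

theorem hessianForm_conePower_self (hx : 0 < ⟪ν, x⟫_ℝ) :
    hessianForm B (conePower ν β c b) (conePower ν β c b) x =
      dirDeriv (conePowerGrad ν β c b x)
        (dirDeriv (conePowerGrad ν β c b x) (conePower ν β c b)) x := by
  rw [hessianForm_eq_dirDeriv_dirDeriv _ _ (contDiffAt_conePower hx),
    sum_dirDeriv_smul_eq_conePowerGrad B hx]

theorem laplacianAlong_conePower (hν : ‖ν‖ = 1) (hx : 0 < ⟪ν, x⟫_ℝ) :
    laplacianAlong B (conePower ν β c b) x =
      conePower ν (β - 2) (β * (β - 1) * c) (β * (Fintype.card ι + β - 2) * b) x := by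
  have hx₀ : 0 < ‖x‖ := norm_pos_iff.2 (ne_zero_of_inner_pos hx)
  have norm_pow : ‖x‖ ^ (β - 4) * ‖x‖ ^ 2 = ‖x‖ ^ (β - 2) := by
    rw [← rpow_natCast, ← rpow_add hx₀]
    norm_num [sub_add]
  simp only [laplacianAlong, dirDeriv_dirDeriv_conePower hx, Finset.sum_sub_distrib,
    Finset.sum_add_distrib, ← Finset.mul_sum, B.sum_sq_inner_left, B.norm_eq_one, hν]
  simp only [conePower, one_pow, mul_one, Finset.sum_const, Finset.card_univ, nsmul_eq_mul]
  linear_combination -(β * b * (β - 2)) * norm_pow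

theorem gradInner_spatial_self (v : E × ℝ → ℝ) (p : E × ℝ) :
    gradInner (spatial B) v v p = ‖spatialGrad B v p‖ ^ 2 := by
  rw [← real_inner_self_eq_norm_sq, spatialGrad, B.orthonormal.inner_sum]
  simp [gradInner]

end ConePower

section TimeWeight

variable {s t : ℝ}

/-- The singular time weight `Λ` of the Carleman estimate, with exponent `s = α / 2`. -/
noncomputable def timeWeight (s t : ℝ) : ℝ := (1 - t) / t ^ s

theorem timeWeight_eq_rpow_sub_rpow (s : ℝ) (ht : 0 < t) :
    timeWeight s t = t ^ (-s) - t ^ (1 - s) := by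
  rw [timeWeight, rpow_neg ht.le, rpow_sub ht, rpow_one]
  ring

theorem contDiffAt_timeWeight (s : ℝ) (ht : 0 < t) : ContDiffAt ℝ ∞ (timeWeight s) t :=
  (contDiffAt_const.sub contDiffAt_id).div (contDiffAt_id.rpow_const_of_ne ht.ne')
    (rpow_pos_of_pos ht s).ne'

theorem deriv_timeWeight (s : ℝ) (ht : 0 < t) :
    deriv (timeWeight s) t = -(s * t ^ (-s - 1) + (1 - s) * t ^ (-s)) := by
  have h : timeWeight s =ᶠ[𝓝 t] fun r => r ^ (-s) - r ^ (1 - s) :=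
    (eventually_gt_nhds ht).mono fun r hr => timeWeight_eq_rpow_sub_rpow s hr
  rw [h.deriv_eq, ((hasDerivAt_rpow_const (Or.inl ht.ne')).fun_sub
    (hasDerivAt_rpow_const (Or.inl ht.ne'))).deriv]
  ring_nf

theorem deriv_deriv_timeWeight (s : ℝ) (ht : 0 < t) :
    deriv (deriv (timeWeight s)) t =
      s * ((s + 1) * t ^ (-s - 1 - 1) + (1 - s) * t ^ (-s - 1)) := by
  have h : deriv (timeWeight s) =ᶠ[𝓝 t] fun r => -(s * r ^ (-s - 1) + (1 - s) * r ^ (-s)) :=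
    (eventually_gt_nhds ht).mono fun r hr => deriv_timeWeight s hr
  rw [h.deriv_eq, (((hasDerivAt_rpow_const (Or.inl ht.ne')).const_mul s).fun_add
    ((hasDerivAt_rpow_const (Or.inl ht.ne')).const_mul (1 - s))).fun_neg.deriv]
  ring

theorem timeWeight_nonneg (s : ℝ) (ht : t ∈ Ioo 0 1) : 0 ≤ timeWeight s t :=
  div_nonneg (sub_nonneg.2 ht.2.le) (rpow_nonneg ht.1.le s)

theorem rpow_neg_le_neg_deriv_timeWeight (hs : 0 ≤ s) (ht : t ∈ Ioo 0 1) :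
    t ^ (-s) ≤ -deriv (timeWeight s) t := by
  rw [deriv_timeWeight s ht.1]
  have rpow_le : t ^ (-s) ≤ t ^ (-s - 1) :=
    rpow_le_rpow_of_exponent_ge ht.1 ht.2.le (by linarith)
  linarith [mul_le_mul_of_nonneg_left rpow_le hs]

theorem timeWeight_le_neg_deriv (hs : 0 ≤ s) (ht : t ∈ Ioo 0 1) :
    timeWeight s t ≤ -deriv (timeWeight s) t := by
  rw [timeWeight_eq_rpow_sub_rpow s ht.1]
  linarith [rpow_neg_le_neg_deriv_timeWeight hs ht, rpow_nonneg ht.1.le (1 - s)]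

theorem one_le_neg_deriv_timeWeight (hs : 0 ≤ s) (ht : t ∈ Ioo 0 1) :
    1 ≤ -deriv (timeWeight s) t :=
  (one_le_rpow_of_pos_of_le_one_of_nonpos ht.1 ht.2.le (neg_nonpos.2 hs)).trans
    (rpow_neg_le_neg_deriv_timeWeight hs ht)

theorem neg_deriv_le_deriv_deriv_timeWeight (hs : s ∈ Icc (1 / 2) 1) (ht : t ∈ Ioo 0 1) :
    -deriv (timeWeight s) t ≤ deriv (deriv (timeWeight s)) t := by
  obtain ⟨hs₁, hs₂⟩ := hs
  rw [deriv_timeWeight s ht.1, deriv_deriv_timeWeight s ht.1]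
  have h₁ : (1 - s) * t ^ (-s) ≤ (1 - s) * t ^ (-s - 1) := mul_le_mul_of_nonneg_left
    (rpow_le_rpow_of_exponent_ge ht.1 ht.2.le (by linarith)) (sub_nonneg.2 hs₂)
  have h₂ : s * (s + 1) * t ^ (-s - 1) ≤ s * (s + 1) * t ^ (-s - 1 - 1) :=
    mul_le_mul_of_nonneg_left (rpow_le_rpow_of_exponent_ge ht.1 ht.2.le (by linarith))
      (by nlinarith)
  have h₃ : 0 ≤ (2 * s - 1) * t ^ (-s - 1) :=
    mul_nonneg (by linarith) (rpow_nonneg ht.1.le _)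
  linarith

end TimeWeight

section Exponent

variable {ε α r : ℝ}

/-- The exponents `α` for which the space weight `⟪ν, x⟫ ^ α - ε ^ α ‖x‖ ^ α` is suited to the
Carleman estimate: `four_mul_lt` makes its gradient large enough, `cubic_lt` makes it convex enough
in the direction of its gradient. -/
structure AdmissibleExponent (ε α : ℝ) : Prop where
  pos : 0 < ε
  lt_one : ε < 1
  one_lt : 1 < α
  lt_two : α < 2
  four_mul_lt : 4 * ε ^ α < α * (1 - ε ^ α)
  cubic_lt : 2 * (ε ^ α) ^ 3 * (1 - ε ^ 2) < (α - 1 - 2 * ε ^ α) * ε ^ 2 * (1 - ε ^ α) ^ 2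

theorem exists_admissibleExponent (hε : ε ∈ Ioo 0 (1 / √3)) : ∃ α, AdmissibleExponent ε α := by
  obtain ⟨hε₀, hε₁⟩ := hε
  have sq_pos : 0 < ε ^ 2 := by positivity
  have sq_lt : ε ^ 2 < 1 / 3 := by
    simpa [div_pow] using pow_lt_pow_left₀ hε₁ hε₀.le two_ne_zero
  have continuousAt_rpow : ContinuousAt (fun α : ℝ => ε ^ α) 2 := continuousAt_const_rpow hε₀.ne'
  have eventually_one_lt : ∀ᶠ α : ℝ in 𝓝 2, 1 < α := eventually_gt_nhds one_lt_two
  have eventually_four_mul_lt : ∀ᶠ α : ℝ in 𝓝 2, 4 * ε ^ α < α * (1 - ε ^ α) :=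
    ContinuousAt.eventually_lt (by fun_prop) (by fun_prop) (by rw [rpow_two]; linarith)
  have eventually_cubic_lt : ∀ᶠ α : ℝ in 𝓝 2, 2 * (ε ^ α) ^ 3 * (1 - ε ^ 2) <
      (α - 1 - 2 * ε ^ α) * ε ^ 2 * (1 - ε ^ α) ^ 2 := by
    refine ContinuousAt.eventually_lt (by fun_prop) (by fun_prop) ?_
    have : 0 < ε ^ 2 * (1 - ε ^ 2) * (1 - 3 * ε ^ 2) :=
      mul_pos (mul_pos sq_pos (by linarith)) (by linarith)
    rw [rpow_two]
    linarith
  obtain ⟨α, ⟨⟨one_lt, four_mul_lt⟩, cubic_lt⟩, lt_two⟩ :=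
    ((((eventually_one_lt.and eventually_four_mul_lt).and eventually_cubic_lt).filter_mono
      nhdsWithin_le_nhds).and (self_mem_nhdsWithin : ∀ᶠ α in 𝓝[<] (2 : ℝ), α < 2)).exists
  exact ⟨α, hε₀, by nlinarith, one_lt, lt_two, four_mul_lt, cubic_lt⟩

theorem AdmissibleExponent.rpow_pos (h : AdmissibleExponent ε α) : 0 < ε ^ α :=
  Real.rpow_pos_of_pos h.pos α

theorem AdmissibleExponent.rpow_lt_one (h : AdmissibleExponent ε α) : ε ^ α < 1 :=
  Real.rpow_lt_one h.pos.le h.lt_one (zero_lt_one.trans h.one_lt)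

theorem AdmissibleExponent.mem_Icc (h : AdmissibleExponent ε α) : α ∈ Icc 0 2 :=
  ⟨(zero_lt_one.trans h.one_lt).le, h.lt_two.le⟩

theorem AdmissibleExponent.sub_two_mul_rpow_nonneg (h : AdmissibleExponent ε α) :
    0 ≤ α - 1 - 2 * ε ^ α := by
  have hb := h.rpow_pos
  have hε : 0 ≤ 1 - ε ^ 2 := sub_nonneg.2 (pow_le_one₀ h.pos.le h.lt_one.le)
  have h_pos : 0 < (α - 1 - 2 * ε ^ α) * (ε ^ 2 * (1 - ε ^ α) ^ 2) := by
    rw [← mul_assoc]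
    exact lt_of_le_of_lt (by positivity) h.cubic_lt
  exact (pos_of_mul_pos_left h_pos (by positivity)).le

/-- Twice the bound `α ε ^ α r ^ (α - 2)` for the concavity of the space weight
`⟪ν, x⟫ ^ α - ε ^ α ‖x‖ ^ α` at distance `r = ‖x‖` from the vertex. -/
noncomputable def concavityBound (ε α r : ℝ) : ℝ := 2 * α * ε ^ α * r ^ (α - 2)

theorem concavityBound_nonneg (h : AdmissibleExponent ε α) (hr : 0 ≤ r) :
    0 ≤ concavityBound ε α r := by
  have := h.mem_Icc.1
  have := h.pos
  unfold concavityBound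
  positivity

theorem concavityBound_le (h : AdmissibleExponent ε α) (hr : 1 ≤ r) :
    concavityBound ε α r ≤ 2 * α * ε ^ α :=
  mul_le_of_le_one_right (mul_nonneg (mul_nonneg zero_le_two h.mem_Icc.1) h.rpow_pos.le)
    (rpow_le_one_of_one_le_of_nonpos hr (sub_nonpos.2 h.lt_two.le))

end Exponent

section SpaceWeight

variable {E : Type*} [NormedAddCommGroup E] [InnerProductSpace ℝ E] {ν x : E} {ε α b : ℝ}

theorem sub_le_dirDeriv_dirDeriv_conePower (hα : α ∈ Icc 0 2) (hb : 0 ≤ b) (hx : 0 < ⟪ν, x⟫_ℝ)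
    (w : E) :
    α * (α - 1) * ⟪ν, x⟫_ℝ ^ (α - 2) * ⟪ν, w⟫_ℝ ^ 2 - α * b * ‖x‖ ^ (α - 2) * ‖w‖ ^ 2 ≤
      dirDeriv w (dirDeriv w (conePower ν α 1 b)) x := by
  rw [dirDeriv_dirDeriv_conePower hx]
  have radial_nonneg : 0 ≤ (2 - α) * (α * b * ‖x‖ ^ (α - 4) * ⟪x, w⟫_ℝ ^ 2) :=
    have := hα.1
    mul_nonneg (sub_nonneg.2 hα.2) (by positivity)
  linarith

theorem inner_conePowerGrad (hν : ‖ν‖ = 1) (hx : 0 < ⟪ν, x⟫_ℝ) :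
    ⟪ν, conePowerGrad ν α 1 b x⟫_ℝ =
      α * ⟪ν, x⟫_ℝ * (⟪ν, x⟫_ℝ ^ (α - 2) - b * ‖x‖ ^ (α - 2)) := by
  have rpow_split : ⟪ν, x⟫_ℝ ^ (α - 1) = ⟪ν, x⟫_ℝ ^ (α - 2) * ⟪ν, x⟫_ℝ := by
    rw [← rpow_add_one hx.ne']
    ring_nf
  rw [conePowerGrad, inner_sub_right, real_inner_smul_right, real_inner_smul_right,
    real_inner_self_eq_norm_sq, hν, rpow_split]
  ring

theorem norm_conePowerGrad_sq (hν : ‖ν‖ = 1) :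
    ‖conePowerGrad ν α 1 b x‖ ^ 2 = ⟪ν, conePowerGrad ν α 1 b x⟫_ℝ ^ 2 +
      (α * b * ‖x‖ ^ (α - 2)) ^ 2 * (‖x‖ ^ 2 - ⟪ν, x⟫_ℝ ^ 2) := by
  rw [conePowerGrad, norm_sub_sq_real, inner_sub_right, real_inner_smul_left,
    real_inner_smul_right, real_inner_smul_right, norm_smul, norm_smul,
    real_inner_self_eq_norm_sq, hν, mul_pow, mul_pow, norm_eq_abs, norm_eq_abs, sq_abs, sq_abs]
  ring

theorem inner_le_norm_of_norm_eq_one (hν : ‖ν‖ = 1) (x : E) : ⟪ν, x⟫_ℝ ≤ ‖x‖ := by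
  simpa [hν] using real_inner_le_norm ν x

theorem inner_conePowerGrad_sq_le (hν : ‖ν‖ = 1) (hx : 0 < ⟪ν, x⟫_ℝ) :
    ⟪ν, conePowerGrad ν α 1 b x⟫_ℝ ^ 2 ≤ ‖conePowerGrad ν α 1 b x‖ ^ 2 := by
  rw [norm_conePowerGrad_sq hν]
  have h := pow_le_pow_left₀ hx.le (inner_le_norm_of_norm_eq_one hν x) 2
  exact le_add_of_nonneg_right (mul_nonneg (sq_nonneg _) (sub_nonneg.2 h))

theorem norm_rpow_le_inner_rpow (hν : ‖ν‖ = 1) (hx : 0 < ⟪ν, x⟫_ℝ) (hα : α ≤ 2) :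
    ‖x‖ ^ (α - 2) ≤ ⟪ν, x⟫_ℝ ^ (α - 2) :=
  rpow_le_rpow_of_nonpos hx (inner_le_norm_of_norm_eq_one hν x) (sub_nonpos.2 hα)

theorem le_inner_conePowerGrad (hν : ‖ν‖ = 1) (hx : 0 < ⟪ν, x⟫_ℝ) (hα : α ∈ Icc 0 2) :
    α * (1 - b) * (⟪ν, x⟫_ℝ * ‖x‖ ^ (α - 2)) ≤ ⟪ν, conePowerGrad ν α 1 b x⟫_ℝ := by
  rw [inner_conePowerGrad hν hx]
  linarith [mul_le_mul_of_nonneg_left (norm_rpow_le_inner_rpow hν hx hα.2)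
    (mul_nonneg hα.1 hx.le)]

/-- The part of the cone with axis `ν` and half-angle `arccos ε` lying beyond the hyperplane
`⟪ν, x⟫ = 1`. -/
def truncatedCone (ν : E) (ε : ℝ) : Set E := {x | ε * ‖x‖ < ⟪ν, x⟫_ℝ ∧ 1 < ⟪ν, x⟫_ℝ}

theorem inner_pos_of_mem_truncatedCone (hx : x ∈ truncatedCone ν ε) : 0 < ⟪ν, x⟫_ℝ :=
  zero_lt_one.trans hx.2

theorem one_le_norm_of_mem_truncatedCone (hν : ‖ν‖ = 1) (hx : x ∈ truncatedCone ν ε) : 1 ≤ ‖x‖ :=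
  hx.2.le.trans (inner_le_norm_of_norm_eq_one hν x)

/-- The space weight of the Carleman estimate. -/
noncomputable abbrev coneWeight (ν : E) (ε α : ℝ) : E → ℝ := conePower ν α 1 (ε ^ α)

/-- The gradient of `coneWeight ν ε α`. -/
noncomputable abbrev coneWeightGrad (ν : E) (ε α : ℝ) : E → E := conePowerGrad ν α 1 (ε ^ α)

theorem coneWeight_nonneg (h : AdmissibleExponent ε α) (hx : x ∈ truncatedCone ν ε) :
    0 ≤ coneWeight ν ε α x := by
  have := rpow_le_rpow (mul_nonneg h.pos.le (norm_nonneg x)) hx.1.le h.mem_Icc.1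
  rw [mul_rpow h.pos.le (norm_nonneg x)] at this
  simpa [coneWeight, conePower] using this

theorem neg_concavityBound_mul_le (h : AdmissibleExponent ε α) (hx : 0 < ⟪ν, x⟫_ℝ) (w : E) :
    -(concavityBound ε α ‖x‖ * ‖w‖ ^ 2) ≤
      2 * dirDeriv w (dirDeriv w (coneWeight ν ε α)) x := by
  have axial_nonneg : 0 ≤ (α - 1) * (α * ⟪ν, x⟫_ℝ ^ (α - 2) * ⟪ν, w⟫_ℝ ^ 2) :=
    have := h.mem_Icc.1
    mul_nonneg (sub_nonneg.2 h.one_lt.le) (by positivity)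
  rw [concavityBound]
  linarith [sub_le_dirDeriv_dirDeriv_conePower h.mem_Icc h.rpow_pos.le hx w]

theorem four_mul_le_inner_coneWeightGrad (h : AdmissibleExponent ε α) (hν : ‖ν‖ = 1)
    (hx : 0 < ⟪ν, x⟫_ℝ) :
    4 * ε ^ α * (⟪ν, x⟫_ℝ * ‖x‖ ^ (α - 2)) ≤ ⟪ν, coneWeightGrad ν ε α x⟫_ℝ :=
  (mul_le_mul_of_nonneg_right h.four_mul_lt.le (by positivity)).trans
    (le_inner_conePowerGrad hν hx h.mem_Icc)

theorem sq_le_norm_coneWeightGrad_sq (h : AdmissibleExponent ε α) (hν : ‖ν‖ = 1)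
    (hx : x ∈ truncatedCone ν ε) :
    (α * ε * (1 - ε ^ α)) ^ 2 ≤ ‖coneWeightGrad ν ε α x‖ ^ 2 := by
  have hx₀ := inner_pos_of_mem_truncatedCone hx
  have hα := h.mem_Icc.1
  have hb := sub_nonneg.2 h.rpow_lt_one.le
  have hε := h.pos.le
  have one_le_rpow : 1 ≤ ‖x‖ * ‖x‖ ^ (α - 2) := by
    rw [mul_comm, ← rpow_add_one (norm_ne_zero_iff.2 (ne_zero_of_inner_pos hx₀))]
    exact Real.one_le_rpow (one_le_norm_of_mem_truncatedCone hν hx) (by linarith [h.one_lt])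
  have le_axial : α * ε * (1 - ε ^ α) ≤ ⟪ν, coneWeightGrad ν ε α x⟫_ℝ := calc
    α * ε * (1 - ε ^ α) ≤ α * ε * (1 - ε ^ α) * (‖x‖ * ‖x‖ ^ (α - 2)) :=
      le_mul_of_one_le_right (by positivity) one_le_rpow
    _ = α * (1 - ε ^ α) * (ε * ‖x‖ * ‖x‖ ^ (α - 2)) := by ring
    _ ≤ α * (1 - ε ^ α) * (⟪ν, x⟫_ℝ * ‖x‖ ^ (α - 2)) := by gcongr; exact hx.1.le
    _ ≤ ⟪ν, coneWeightGrad ν ε α x⟫_ℝ := le_inner_conePowerGrad hν hx₀ h.mem_Icc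
  exact (pow_le_pow_left₀ (by positivity) le_axial 2).trans (inner_conePowerGrad_sq_le hν hx₀)

theorem concavityBound_sq_le (h : AdmissibleExponent ε α) (hν : ‖ν‖ = 1)
    (hx : x ∈ truncatedCone ν ε) :
    concavityBound ε α ‖x‖ ^ 2 ≤ ‖coneWeightGrad ν ε α x‖ ^ 2 := by
  have hx₀ := inner_pos_of_mem_truncatedCone hx
  have hb := h.rpow_pos.le
  have le_axial : concavityBound ε α ‖x‖ ≤ ⟪ν, coneWeightGrad ν ε α x⟫_ℝ := calc
    concavityBound ε α ‖x‖ = 2 * α * (ε ^ α * (1 * ‖x‖ ^ (α - 2))) := by rw [concavityBound]; ring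
    _ ≤ 4 * (ε ^ α * (⟪ν, x⟫_ℝ * ‖x‖ ^ (α - 2))) := by
      gcongr
      · linarith [h.lt_two]
      · exact hx.2.le
    _ = 4 * ε ^ α * (⟪ν, x⟫_ℝ * ‖x‖ ^ (α - 2)) := by ring
    _ ≤ ⟪ν, coneWeightGrad ν ε α x⟫_ℝ := four_mul_le_inner_coneWeightGrad h hν hx₀
  exact (pow_le_pow_left₀ (concavityBound_nonneg h (norm_nonneg x)) le_axial 2).trans
    (inner_conePowerGrad_sq_le hν hx₀)

theorem mul_coneWeight_le_inner_coneWeightGrad (h : AdmissibleExponent ε α) (hν : ‖ν‖ = 1)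
    (hx : 0 < ⟪ν, x⟫_ℝ) :
    α * coneWeight ν ε α x ≤ ⟪ν, x⟫_ℝ * ⟪ν, coneWeightGrad ν ε α x⟫_ℝ := by
  have rpow_split {r : ℝ} (hr : 0 < r) : r ^ α = r ^ (α - 2) * r ^ 2 := by
    rw [← rpow_two, ← rpow_add hr, sub_add_cancel]
  have hx₀ := norm_pos_iff.2 (ne_zero_of_inner_pos hx)
  have hxr := pow_le_pow_left₀ hx.le (inner_le_norm_of_norm_eq_one hν x) 2
  have radial_le : α * ε ^ α * ‖x‖ ^ (α - 2) * ⟪ν, x⟫_ℝ ^ 2 ≤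
      α * ε ^ α * ‖x‖ ^ (α - 2) * ‖x‖ ^ 2 := by
    have := h.mem_Icc.1
    have := h.pos
    gcongr
  rw [coneWeight, conePower, inner_conePowerGrad hν hx, rpow_split hx, rpow_split hx₀]
  linarith

theorem two_mul_concavityBound_mul_coneWeight_le (h : AdmissibleExponent ε α) (hν : ‖ν‖ = 1)
    (hx : 0 < ⟪ν, x⟫_ℝ) :
    2 * (concavityBound ε α ‖x‖ * coneWeight ν ε α x) ≤ ‖coneWeightGrad ν ε α x‖ ^ 2 := by
  have hb := h.pos
  set η := ⟪ν, coneWeightGrad ν ε α x⟫_ℝ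
  have η_ge : 4 * ε ^ α * (⟪ν, x⟫_ℝ * ‖x‖ ^ (α - 2)) ≤ η :=
    four_mul_le_inner_coneWeightGrad h hν hx
  calc 2 * (concavityBound ε α ‖x‖ * coneWeight ν ε α x)
      = 4 * ε ^ α * ‖x‖ ^ (α - 2) * (α * coneWeight ν ε α x) := by rw [concavityBound]; ring
    _ ≤ 4 * ε ^ α * ‖x‖ ^ (α - 2) * (⟪ν, x⟫_ℝ * η) :=
      mul_le_mul_of_nonneg_left (mul_coneWeight_le_inner_coneWeightGrad h hν hx) (by positivity)
    _ = 4 * ε ^ α * (⟪ν, x⟫_ℝ * ‖x‖ ^ (α - 2)) * η := by ring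
    _ ≤ η ^ 2 := by
      rw [sq]
      exact mul_le_mul_of_nonneg_right η_ge (le_trans (by positivity) η_ge)
    _ ≤ ‖coneWeightGrad ν ε α x‖ ^ 2 := inner_conePowerGrad_sq_le hν hx

theorem radial_le_inner_coneWeightGrad_sq (h : AdmissibleExponent ε α) (hν : ‖ν‖ = 1)
    (hx : x ∈ truncatedCone ν ε) :
    2 * ε ^ α * ((α * ε ^ α * ‖x‖ ^ (α - 2)) ^ 2 * (‖x‖ ^ 2 - ⟪ν, x⟫_ℝ ^ 2)) ≤
      (α - 1 - 2 * ε ^ α) * ⟪ν, coneWeightGrad ν ε α x⟫_ℝ ^ 2 := by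
  have hx₀ := inner_pos_of_mem_truncatedCone hx
  have hα := h.mem_Icc.1
  have := h.rpow_pos
  have hb' := sub_nonneg.2 h.rpow_lt_one.le
  have hε := h.pos
  have cone_bound : ε ^ 2 * (‖x‖ ^ 2 - ⟪ν, x⟫_ℝ ^ 2) ≤ (1 - ε ^ 2) * ⟪ν, x⟫_ℝ ^ 2 := by
    linarith [pow_le_pow_left₀ (by positivity) hx.1.le 2, mul_pow ε ‖x‖ 2]
  have axial_ge := pow_le_pow_left₀ (by positivity) (le_inner_conePowerGrad hν hx₀ h.mem_Icc) 2
  refine le_of_mul_le_mul_left ?_ (pow_pos hε 2)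
  calc ε ^ 2 * (2 * ε ^ α * ((α * ε ^ α * ‖x‖ ^ (α - 2)) ^ 2 * (‖x‖ ^ 2 - ⟪ν, x⟫_ℝ ^ 2)))
      = 2 * ε ^ α * (α * ε ^ α * ‖x‖ ^ (α - 2)) ^ 2 *
          (ε ^ 2 * (‖x‖ ^ 2 - ⟪ν, x⟫_ℝ ^ 2)) := by ring
    _ ≤ 2 * ε ^ α * (α * ε ^ α * ‖x‖ ^ (α - 2)) ^ 2 * ((1 - ε ^ 2) * ⟪ν, x⟫_ℝ ^ 2) := by gcongr
    _ = 2 * (ε ^ α) ^ 3 * (1 - ε ^ 2) * (α * (⟪ν, x⟫_ℝ * ‖x‖ ^ (α - 2))) ^ 2 := by ring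
    _ ≤ (α - 1 - 2 * ε ^ α) * ε ^ 2 * (1 - ε ^ α) ^ 2 *
          (α * (⟪ν, x⟫_ℝ * ‖x‖ ^ (α - 2))) ^ 2 :=
        mul_le_mul_of_nonneg_right h.cubic_lt.le (sq_nonneg _)
    _ = ε ^ 2 * ((α - 1 - 2 * ε ^ α) *
          (α * (1 - ε ^ α) * (⟪ν, x⟫_ℝ * ‖x‖ ^ (α - 2))) ^ 2) := by ring
    _ ≤ ε ^ 2 * ((α - 1 - 2 * ε ^ α) * ⟪ν, coneWeightGrad ν ε α x⟫_ℝ ^ 2) := by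
        gcongr
        exact h.sub_two_mul_rpow_nonneg

theorem norm_coneWeightGrad_sq_le (h : AdmissibleExponent ε α) (hν : ‖ν‖ = 1)
    (hx : x ∈ truncatedCone ν ε) :
    2 * ε ^ α * ‖x‖ ^ (α - 2) * ‖coneWeightGrad ν ε α x‖ ^ 2 ≤
      (α - 1) * ⟪ν, x⟫_ℝ ^ (α - 2) * ⟪ν, coneWeightGrad ν ε α x⟫_ℝ ^ 2 := by
  have radial_le := mul_le_mul_of_nonneg_left (radial_le_inner_coneWeightGrad_sq h hν hx)
    (rpow_nonneg (norm_nonneg x) (α - 2))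
  have rpow_le := mul_le_mul_of_nonneg_left
    (norm_rpow_le_inner_rpow hν (inner_pos_of_mem_truncatedCone hx) h.lt_two.le)
    (mul_nonneg (sub_nonneg.2 h.one_lt.le) (sq_nonneg ⟪ν, coneWeightGrad ν ε α x⟫_ℝ))
  rw [norm_conePowerGrad_sq hν]
  linarith

theorem concavityBound_mul_norm_sq_le (h : AdmissibleExponent ε α) (hν : ‖ν‖ = 1)
    (hx : x ∈ truncatedCone ν ε) :
    concavityBound ε α ‖x‖ * ‖coneWeightGrad ν ε α x‖ ^ 2 ≤
      2 * dirDeriv (coneWeightGrad ν ε α x)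
        (dirDeriv (coneWeightGrad ν ε α x) (coneWeight ν ε α)) x := by
  have convexity := sub_le_dirDeriv_dirDeriv_conePower h.mem_Icc h.rpow_pos.le
    (inner_pos_of_mem_truncatedCone hx) (coneWeightGrad ν ε α x)
  have gradient := mul_le_mul_of_nonneg_left (norm_coneWeightGrad_sq_le h hν hx) h.mem_Icc.1
  rw [concavityBound]
  linarith

end SpaceWeight

section PointwiseBound

-- `Λ`, `Λ₁`, `Λ₂` stand for the time weight and its first two derivatives, `Φ` for the space
-- weight, `G` for `|∇Φ|²`, `Q` for `D²Φ(∇Φ, ∇Φ)`, `M` for the Laplacian of the multiplier in space.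
theorem carlemanForm_coefficient_lower_bound {a Λ Λ₁ Λ₂ t Φ G g M κ Q : ℝ} (ha : 0 ≤ a)
    (hΛ : 0 ≤ Λ) (hΛ_le : Λ ≤ -Λ₁) (hΛ₁ : 1 ≤ -Λ₁) (hΛ₂ : -Λ₁ ≤ Λ₂) (ht : 0 ≤ t) (hΦ : 0 ≤ Φ)
    (hg : 0 ≤ g) (hgΦ : 2 * (g * Φ) ≤ G) (hgG : g ^ 2 ≤ G) (hκ : κ ≤ G) (hQ : g * G ≤ 2 * Q)
    (hM : M + g / 2 + 1 / 4 ≤ a * κ) :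
    1 / 4 * (a * (Λ + Φ)) + 1 / 2 * ((a * Λ) ^ 2 * G) ≤
      -(a * Λ * M) + (a * Λ₂ * Φ + 2) - 4 * (a * Λ * (a * Λ₁) * G) + 4 * ((a * Λ) ^ 3 * Q) -
        2 * ((a * Λ) ^ 2 * G - (a * Λ₁ * Φ + 2 * t)) * (a * Λ * g + 1 / 4) -
        (a * Λ * g + 1 / 4) ^ 2 := by
  have hG : 0 ≤ G := (sq_nonneg g).trans hgG
  have : 0 ≤ -Λ₁ := hΛ.trans hΛ_le
  have cubic : 0 ≤ 2 * (a * Λ) ^ 3 * (2 * Q - g * G) :=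
    mul_nonneg (by positivity) (sub_nonneg.2 hQ)
  have quadratic : 0 ≤ a * (a * Λ) *
      ((-Λ₁ - Λ) * (G + g ^ 2) + -Λ₁ * (G - 2 * (g * Φ)) + -Λ₁ * (G - g ^ 2)) := by
    have := sub_nonneg.2 hΛ_le
    have := sub_nonneg.2 hgΦ
    have := sub_nonneg.2 hgG
    positivity
  have linear : 0 ≤ a * Λ *
      (a * (G * (-Λ₁ - 1) + (G - κ)) + (a * κ - (M + g / 2 + 1 / 4))) := by
    have := sub_nonneg.2 hΛ₁
    have := sub_nonneg.2 hκ
    have := sub_nonneg.2 hM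
    positivity
  have weight : 0 ≤ a * Φ * ((Λ₂ - -Λ₁) + 1 / 2 * -Λ₁ - 1 / 4) :=
    mul_nonneg (by positivity) (by linarith)
  have drift : 0 ≤ 4 * t * (a * Λ * g + 1 / 4) := by positivity
  linarith

variable {E ι : Type*} [NormedAddCommGroup E] [InnerProductSpace ℝ E] [Fintype ι]
  {ν x : E} {ε α a t : ℝ}

/-- The space part of the Carleman multiplier in dimension `d`: the Laplacian of the space weight,
raised by `concavityBound ε α ‖x‖` to make up for the concavity of the weight. -/
noncomputable abbrev coneMultiplier (ν : E) (ε α d : ℝ) : E → ℝ :=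
  conePower ν (α - 2) (α * (α - 1)) (α * (d + α - 4) * ε ^ α)

/-- An upper bound for the Laplacian of `coneMultiplier ν ε α d` on the truncated cone. -/
noncomputable def multiplierLaplacianBound (ε α d : ℝ) : ℝ :=
  (2 - α) * (3 - α) * α * (α - 1) + (2 - α) * α * (d + α - 4) ^ 2 * ε ^ α

/-- The value beyond which `a` is large enough for the Carleman estimate in dimension `d`: there `a`
times the lower bound `(α ε (1 - ε ^ α)) ^ 2` for `|∇Φ|²` absorbs the lower order terms. -/
noncomputable def carlemanThreshold (ε α d : ℝ) : ℝ :=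
  (multiplierLaplacianBound ε α d + α * ε ^ α + 1 / 4) / (α * ε * (1 - ε ^ α)) ^ 2

theorem AdmissibleExponent.sq_mul_one_sub_rpow_pos (h : AdmissibleExponent ε α) :
    0 < (α * ε * (1 - ε ^ α)) ^ 2 := by
  have hα := zero_lt_one.trans h.one_lt
  have hε := h.pos
  have hb := sub_pos.2 h.rpow_lt_one
  positivity

theorem carlemanThreshold_pos (h : AdmissibleExponent ε α) (d : ℝ) :
    0 < carlemanThreshold ε α d := by
  refine div_pos ?_ h.sq_mul_one_sub_rpow_pos
  have hα := h.mem_Icc.1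
  have hα₁ := sub_nonneg.2 h.one_lt.le
  have hα₂ := sub_nonneg.2 h.lt_two.le
  have hα₃ : 0 ≤ 3 - α := by linarith
  have hb := h.rpow_pos
  unfold multiplierLaplacianBound
  positivity

variable (B : OrthonormalBasis ι ℝ E)

theorem coneMultiplier_sub_laplacianAlong (hν : ‖ν‖ = 1) (hx : 0 < ⟪ν, x⟫_ℝ) :
    coneMultiplier ν ε α (Fintype.card ι) x - laplacianAlong B (coneWeight ν ε α) x =
      concavityBound ε α ‖x‖ := by
  rw [laplacianAlong_conePower B hν hx, coneMultiplier, conePower, conePower, concavityBound]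
  ring

theorem laplacianAlong_coneMultiplier_le (h : AdmissibleExponent ε α) (hν : ‖ν‖ = 1)
    (hx : x ∈ truncatedCone ν ε) :
    laplacianAlong B (coneMultiplier ν ε α (Fintype.card ι)) x ≤
      multiplierLaplacianBound ε α (Fintype.card ι) := by
  have hα := h.mem_Icc.1
  have hα₁ := sub_nonneg.2 h.one_lt.le
  have hα₂ := sub_nonneg.2 h.lt_two.le
  have hα₃ : 0 ≤ 3 - α := by linarith
  have hb := h.rpow_pos
  have axial_le : ⟪ν, x⟫_ℝ ^ (α - 2 - 2) ≤ 1 :=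
    rpow_le_one_of_one_le_of_nonpos hx.2.le (by linarith)
  have radial_le : ‖x‖ ^ (α - 2 - 2) ≤ 1 :=
    rpow_le_one_of_one_le_of_nonpos (one_le_norm_of_mem_truncatedCone hν hx) (by linarith)
  rw [laplacianAlong_conePower B hν (inner_pos_of_mem_truncatedCone hx)]
  calc conePower ν (α - 2 - 2) _ _ x
      = (2 - α) * (3 - α) * α * (α - 1) * ⟪ν, x⟫_ℝ ^ (α - 2 - 2) +
        (2 - α) * α * (Fintype.card ι + α - 4) ^ 2 * ε ^ α * ‖x‖ ^ (α - 2 - 2) := by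
        rw [conePower]
        ring
    _ ≤ multiplierLaplacianBound ε α (Fintype.card ι) :=
        add_le_add (mul_le_of_le_one_right (by positivity) axial_le)
          (mul_le_of_le_one_right (by positivity) radial_le)

theorem multiplier_terms_le (h : AdmissibleExponent ε α) (hν : ‖ν‖ = 1)
    (ha : carlemanThreshold ε α (Fintype.card ι) < a) (hx : x ∈ truncatedCone ν ε) :
    laplacianAlong B (coneMultiplier ν ε α (Fintype.card ι)) x + concavityBound ε α ‖x‖ / 2 +
      1 / 4 ≤ a * (α * ε * (1 - ε ^ α)) ^ 2 := by
  have threshold_le := ((div_lt_iff₀ h.sq_mul_one_sub_rpow_pos).1 ha).le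
  linarith [laplacianAlong_coneMultiplier_le B h hν hx,
    concavityBound_le h (one_le_norm_of_mem_truncatedCone hν hx)]

/-- The Carleman weight `φ(x, t) = a Λ(t) Φ(x) + t ^ 2` on space-time, where
`Φ(x) = ⟪ν, x⟫ ^ α - ε ^ α ‖x‖ ^ α`. -/
noncomputable def carlemanWeight (ν : E) (ε α a : ℝ) : E × ℝ → ℝ :=
  separated (fun t => a * timeWeight (α / 2) t) (coneWeight ν ε α) (fun t => t ^ 2)

/-- The zeroth order multiplier paired with `carlemanWeight ν ε α a` in dimension `d`. The constant
`1 / 4` produces the gradient term of the Carleman estimate. -/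
noncomputable def carlemanMultiplier (ν : E) (ε α a d : ℝ) : E × ℝ → ℝ :=
  separated (fun t => a * timeWeight (α / 2) t) (coneMultiplier ν ε α d) (fun _ => 1 / 4)

theorem contDiffAt_carlemanWeight (hx : 0 < ⟪ν, x⟫_ℝ) (ht : 0 < t) :
    ContDiffAt ℝ ∞ (carlemanWeight ν ε α a) (x, t) :=
  contDiffAt_separated (contDiffAt_const.mul (contDiffAt_timeWeight _ ht)) (contDiffAt_conePower hx)
    (contDiffAt_id.pow 2)

theorem contDiffAt_carlemanMultiplier (d : ℝ) (hx : 0 < ⟪ν, x⟫_ℝ) (ht : 0 < t) :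
    ContDiffAt ℝ ∞ (carlemanMultiplier ν ε α a d) (x, t) :=
  contDiffAt_separated (contDiffAt_const.mul (contDiffAt_timeWeight _ ht)) (contDiffAt_conePower hx)
    contDiffAt_const

theorem gradInner_carlemanWeight (hx : 0 < ⟪ν, x⟫_ℝ) (ht : 0 < t) :
    gradInner (spatial B) (carlemanWeight ν ε α a) (carlemanWeight ν ε α a) (x, t) =
      (a * timeWeight (α / 2) t) ^ 2 * ‖coneWeightGrad ν ε α x‖ ^ 2 := by
  have hl := differentiableAt_of_contDiffAt_infty
    (contDiffAt_const (c := a) |>.mul (contDiffAt_timeWeight (α / 2) ht))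
  have hΦ := differentiableAt_of_contDiffAt_infty
    (contDiffAt_conePower (β := α) (c := 1) (b := ε ^ α) hx)
  have ht₂ : DifferentiableAt ℝ (fun t : ℝ => t ^ 2) t := by fun_prop
  rw [carlemanWeight, gradInner_spatial_separated B hl hΦ ht₂ hl hΦ ht₂,
    gradInner_conePower_self B hx, sq (a * timeWeight (α / 2) t)]

theorem carlemanForm_carlemanWeight (hν : ‖ν‖ = 1) (hx : 0 < ⟪ν, x⟫_ℝ) (ht : 0 < t)
    (v : E × ℝ → ℝ) {k : ℝ}
    (hk : k = a * timeWeight (α / 2) t * concavityBound ε α ‖x‖ + 1 / 4) :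
    carlemanForm (spatial B) (0, 1) (carlemanWeight ν ε α a)
        (carlemanMultiplier ν ε α a (Fintype.card ι)) v (x, t) =
      4 * (a * timeWeight (α / 2) t * dirDeriv (spatialGrad B v (x, t))
        (dirDeriv (spatialGrad B v (x, t)) (coneWeight ν ε α)) x) +
      2 * k * gradInner (spatial B) v v (x, t) +
      v (x, t) ^ 2 * (-(a * timeWeight (α / 2) t *
          laplacianAlong B (coneMultiplier ν ε α (Fintype.card ι)) x) +
        (a * deriv (deriv (timeWeight (α / 2))) t * coneWeight ν ε α x + 2) -
        4 * (a * timeWeight (α / 2) t * (a * deriv (timeWeight (α / 2)) t) *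
          ‖coneWeightGrad ν ε α x‖ ^ 2) +
        4 * ((a * timeWeight (α / 2) t) ^ 3 * dirDeriv (coneWeightGrad ν ε α x)
          (dirDeriv (coneWeightGrad ν ε α x) (coneWeight ν ε α)) x) -
        2 * ((a * timeWeight (α / 2) t) ^ 2 * ‖coneWeightGrad ν ε α x‖ ^ 2 -
          (a * deriv (timeWeight (α / 2)) t * coneWeight ν ε α x + 2 * t)) * k - k ^ 2) := by
  have deriv_sq : deriv (fun r : ℝ => r ^ 2) = fun r => 2 * r :=
    funext fun r => by simp
  have deriv_const_mul_timeWeight : deriv (fun r => a * timeWeight (α / 2) r) =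
      fun r => a * deriv (timeWeight (α / 2)) r := deriv_const_mul_field' a
  have deriv_two_mul : deriv (fun r : ℝ => 2 * r) t = 2 := by simp
  rw [← coneMultiplier_sub_laplacianAlong B hν hx] at hk
  have contDiffAt_sq : ContDiffAt ℝ ∞ (fun r : ℝ => r ^ 2) t := contDiffAt_id.pow 2
  rw [carlemanWeight, carlemanMultiplier, carlemanForm_separated B
    (contDiffAt_const.mul (contDiffAt_timeWeight _ ht)) (contDiffAt_conePower hx)
    contDiffAt_sq (contDiffAt_conePower hx) contDiffAt_const v hk,
    gradInner_conePower_self B hx, hessianForm_conePower_self B hx,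
    deriv_const_mul_timeWeight, deriv_sq, deriv_two_mul, deriv_const_mul_field]

theorem gradInner_le_carlemanForm_principal (h : AdmissibleExponent ε α) (hx : 0 < ⟪ν, x⟫_ℝ)
    (ha : 0 ≤ a) (ht : t ∈ Ioo 0 1) (v : E × ℝ → ℝ) :
    1 / 2 * gradInner (spatial B) v v (x, t) ≤
      4 * (a * timeWeight (α / 2) t * dirDeriv (spatialGrad B v (x, t))
        (dirDeriv (spatialGrad B v (x, t)) (coneWeight ν ε α)) x) +
      2 * (a * timeWeight (α / 2) t * concavityBound ε α ‖x‖ + 1 / 4) *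
        gradInner (spatial B) v v (x, t) := by
  rw [gradInner_spatial_self]
  linarith [mul_le_mul_of_nonneg_left (neg_concavityBound_mul_le h hx (spatialGrad B v (x, t)))
    (mul_nonneg ha (timeWeight_nonneg (α / 2) ht))]

theorem le_carlemanForm (h : AdmissibleExponent ε α) (hν : ‖ν‖ = 1)
    (ha : carlemanThreshold ε α (Fintype.card ι) < a) (hx : x ∈ truncatedCone ν ε)
    (ht : t ∈ Ioo 0 1) (v : E × ℝ → ℝ) :
    1 / 2 * gradInner (spatial B) v v (x, t) + v (x, t) ^ 2 *
        (1 / 4 * (a * (timeWeight (α / 2) t + coneWeight ν ε α x)) + 1 / 2 *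
          gradInner (spatial B) (carlemanWeight ν ε α a) (carlemanWeight ν ε α a) (x, t)) ≤
      carlemanForm (spatial B) (0, 1) (carlemanWeight ν ε α a)
        (carlemanMultiplier ν ε α a (Fintype.card ι)) v (x, t) := by
  have ha₀ := ((carlemanThreshold_pos h (Fintype.card ι)).trans ha).le
  have hx₀ := inner_pos_of_mem_truncatedCone hx
  have hs : α / 2 ∈ Icc (1 / 2) 1 := ⟨by linarith [h.one_lt], by linarith [h.lt_two]⟩
  have hs₀ : 0 ≤ α / 2 := by linarith [hs.1]
  rw [carlemanForm_carlemanWeight B hν hx₀ ht.1 v rfl, gradInner_carlemanWeight B hx₀ ht.1]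
  refine add_le_add (gradInner_le_carlemanForm_principal B h hx₀ ha₀ ht v)
    (mul_le_mul_of_nonneg_left ?_ (sq_nonneg _))
  exact carlemanForm_coefficient_lower_bound ha₀ (timeWeight_nonneg _ ht)
    (timeWeight_le_neg_deriv hs₀ ht) (one_le_neg_deriv_timeWeight hs₀ ht)
    (neg_deriv_le_deriv_deriv_timeWeight hs ht) ht.1.le (coneWeight_nonneg h hx)
    (concavityBound_nonneg h (norm_nonneg x)) (two_mul_concavityBound_mul_coneWeight_le h hν hx₀)
    (concavityBound_sq_le h hν hx) (sq_le_norm_coneWeightGrad_sq h hν hx)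
    (concavityBound_mul_norm_sq_le h hν hx) (multiplier_terms_le B h hν ha hx)

/-- The integrand `e ^ {2φ} (a (Λ + Φ) u² + |∇u|²)` on the left of the Carleman estimate. -/
noncomputable def carlemanEnergy (ν : E) (ε α a : ℝ) (e : ι → E) (u : E × ℝ → ℝ) (p : E × ℝ) : ℝ :=
  exp (2 * carlemanWeight ν ε α a p) * (a * (timeWeight (α / 2) p.2 + coneWeight ν ε α p.1) *
    u p ^ 2 + gradInner (spatial e) u u p)

theorem carlemanEnergy_le (h : AdmissibleExponent ε α) (hν : ‖ν‖ = 1)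
    (ha : carlemanThreshold ε α (Fintype.card ι) < a) (hx : x ∈ truncatedCone ν ε)
    (ht : t ∈ Ioo 0 1) {u : E × ℝ → ℝ} (hu : DifferentiableAt ℝ u (x, t)) :
    carlemanEnergy ν ε α a B u (x, t) ≤
      4 * carlemanForm (spatial B) (0, 1) (carlemanWeight ν ε α a)
        (carlemanMultiplier ν ε α a (Fintype.card ι))
        (fun q => exp (carlemanWeight ν ε α a q) * u q) (x, t) := by
  have hφ := differentiableAt_of_contDiffAt_infty
    (contDiffAt_carlemanWeight (ε := ε) (α := α) (a := a) (inner_pos_of_mem_truncatedCone hx) ht.1)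
  have gradient_le := exp_mul_gradInner_self_le (spatial B) hφ hu rfl
  have form_ge := le_carlemanForm B h hν ha hx ht fun q => exp (carlemanWeight ν ε α a q) * u q
  rw [mul_pow, ← exp_nat_mul, Nat.cast_two] at gradient_le form_ge
  rw [carlemanEnergy]
  linarith

end PointwiseBound

section CarlemanEstimate

theorem setIntegral_setIntegral_eq_setIntegral_prod {X Y : Type*} [MeasurableSpace X]
    [MeasurableSpace Y] {μ : Measure X} {ν : Measure Y} [SFinite μ] [SFinite ν] {Q : Set X}
    {T : Set Y} {K : Set (X × Y)} {F : X × Y → ℝ} (hK : K ⊆ Q ×ˢ T)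
    (hF : IntegrableOn F K (μ.prod ν)) (hF₀ : ∀ p ∉ K, F p = 0) :
    ∫ t in T, ∫ x in Q, F (x, t) ∂μ ∂ν = ∫ p in K, F p ∂μ.prod ν := by
  have hF_integrable : Integrable F (μ.prod ν) :=
    (integrableOn_iff_integrable_of_support_subset (Function.support_subset_iff'.2 hF₀)).1 hF
  rw [setIntegral_eq_integral_of_forall_compl_eq_zero hF₀,
    ← setIntegral_eq_integral_of_forall_compl_eq_zero (s := Q ×ˢ T)
      fun p hp => hF₀ p fun h => hp (hK h),
    ← Measure.prod_restrict, integral_prod_symm]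
  rw [Measure.prod_restrict]
  exact hF_integrable.integrableOn

variable {E ι : Type*} [NormedAddCommGroup E] [InnerProductSpace ℝ E] [Fintype ι]
  {ν : E} {ε α a : ℝ} {u : E × ℝ → ℝ} {p : E × ℝ}

theorem contDiffAt_carlemanEnergy (e : ι → E) (hx : 0 < ⟪ν, p.1⟫_ℝ) (ht : 0 < p.2)
    (hu : ContDiffAt ℝ ∞ u p) : ContDiffAt ℝ ∞ (carlemanEnergy ν ε α a e u) p := by
  have hφ : ContDiffAt ℝ ∞ (carlemanWeight ν ε α a) p := contDiffAt_carlemanWeight hx ht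
  have hΛ : ContDiffAt ℝ ∞ (fun q : E × ℝ => timeWeight (α / 2) q.2) p :=
    (contDiffAt_timeWeight (α / 2) ht).comp p contDiffAt_snd
  have hΦ : ContDiffAt ℝ ∞ (fun q : E × ℝ => coneWeight ν ε α q.1) p :=
    (contDiffAt_conePower hx).comp p contDiffAt_fst
  unfold carlemanEnergy
  fun_prop (disch := assumption)

/-- The integrand `e ^ {2φ} |∂ₜu + Δu|²` on the right of the Carleman estimate. -/
noncomputable def carlemanSource (ν : E) (ε α a : ℝ) (e : ι → E) (u : E × ℝ → ℝ) (p : E × ℝ) : ℝ :=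
  (exp (carlemanWeight ν ε α a p) *
    (dirDeriv (0, 1) u p + laplacianAlong (spatial e) u p)) ^ 2

theorem contDiffAt_carlemanSource (e : ι → E) (hx : 0 < ⟪ν, p.1⟫_ℝ) (ht : 0 < p.2)
    (hu : ContDiffAt ℝ ∞ u p) : ContDiffAt ℝ ∞ (carlemanSource ν ε α a e u) p := by
  have hφ : ContDiffAt ℝ ∞ (carlemanWeight ν ε α a) p := contDiffAt_carlemanWeight hx ht
  unfold carlemanSource
  fun_prop (disch := assumption)

theorem dirDeriv_eq_zero_of_notMem_tsupport (hp : p ∉ tsupport u) (w : E × ℝ) :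
    dirDeriv w u p = 0 :=
  dirDeriv_eq_zero_of_notMem (isClosed_tsupport u) (fun _ => image_eq_zero_of_notMem_tsupport) hp w

theorem carlemanEnergy_eq_zero (e : ι → E) (hp : p ∉ tsupport u) :
    carlemanEnergy ν ε α a e u p = 0 := by
  simp [carlemanEnergy, gradInner, image_eq_zero_of_notMem_tsupport hp,
    dirDeriv_eq_zero_of_notMem_tsupport hp]

theorem carlemanSource_eq_zero (e : ι → E) (hp : p ∉ tsupport u) :
    carlemanSource ν ε α a e u p = 0 := by
  have second_deriv_zero (w : E × ℝ) : dirDeriv w (dirDeriv w u) p = 0 :=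
    dirDeriv_eq_zero_of_notMem (isClosed_tsupport u)
      (fun _ hq => dirDeriv_eq_zero_of_notMem_tsupport hq w) hp w
  simp [carlemanSource, laplacianAlong, dirDeriv_eq_zero_of_notMem_tsupport hp, second_deriv_zero]

variable (B : OrthonormalBasis ι ℝ E) [MeasurableSpace E] [BorelSpace E]

theorem setIntegral_carlemanEnergy_le {μ : Measure (E × ℝ)} [μ.IsAddHaarMeasure] {K : Set (E × ℝ)}
    (h : AdmissibleExponent ε α) (hν : ‖ν‖ = 1)
    (ha : carlemanThreshold ε α (Fintype.card ι) < a) (hK : IsCompact K)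
    (hK_subset : K ⊆ truncatedCone ν ε ×ˢ Ioo 0 1) (hu : ∀ p ∈ K, ContDiffAt ℝ ∞ u p)
    (hu₀ : ∀ p ∉ K, u p = 0) :
    ∫ p in K, carlemanEnergy ν ε α a B u p ∂μ ≤
      4 * ∫ p in K, carlemanSource ν ε α a B u p ∂μ := by
  have : FiniteDimensional ℝ E := B.toBasis.finiteDimensional_of_finite
  have axial_pos : ∀ p ∈ K, 0 < ⟪ν, p.1⟫_ℝ := fun p hp =>
    inner_pos_of_mem_truncatedCone (hK_subset hp).1
  have weight_smooth : ∀ p ∈ K, ContDiffAt ℝ ∞ (carlemanWeight ν ε α a) p := fun p hp =>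
    contDiffAt_carlemanWeight (axial_pos p hp) (hK_subset hp).2.1
  have multiplier_smooth : ∀ p ∈ K,
      ContDiffAt ℝ ∞ (carlemanMultiplier ν ε α a (Fintype.card ι)) p := fun p hp =>
    contDiffAt_carlemanMultiplier _ (axial_pos p hp) (hK_subset hp).2.1
  have energy_integrable : IntegrableOn (carlemanEnergy ν ε α a B u) K μ :=
    integrableOn_of_contDiffAt hK fun p hp =>
      contDiffAt_carlemanEnergy B (axial_pos p hp) (hK_subset hp).2.1 (hu p hp)
  have form_integrable : IntegrableOn (carlemanForm (spatial B) (0, 1) (carlemanWeight ν ε α a)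
      (carlemanMultiplier ν ε α a (Fintype.card ι))
      fun q => exp (carlemanWeight ν ε α a q) * u q) K μ :=
    integrableOn_of_contDiffAt hK fun p hp => by fun_prop (disch := assumption)
  refine (setIntegral_mono_on energy_integrable (form_integrable.const_mul 4) hK.measurableSet
    fun p hp => carlemanEnergy_le B h hν ha (hK_subset hp).1 (hK_subset hp).2
      (differentiableAt_of_contDiffAt_infty (hu p hp))).trans ?_
  rw [integral_const_mul]
  exact mul_le_mul_of_nonneg_left (setIntegral_carlemanForm_le (spatial B) (0, 1) hK
    weight_smooth multiplier_smooth hu hu₀) zero_le_four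

theorem integral_integral_carlemanEnergy_le {μ : Measure E} [μ.IsAddHaarMeasure]
    (h : AdmissibleExponent ε α) (hν : ‖ν‖ = 1)
    (ha : carlemanThreshold ε α (Fintype.card ι) < a) (hu : ContDiff ℝ ∞ u)
    (hu_compact : HasCompactSupport u) (hu_supp : tsupport u ⊆ truncatedCone ν ε ×ˢ Ioo 0 1) :
    ∫ t in Ioo 0 1, ∫ x in truncatedCone ν ε, carlemanEnergy ν ε α a B u (x, t) ∂μ ≤
      4 * ∫ t in Ioo 0 1, ∫ x in truncatedCone ν ε, carlemanSource ν ε α a B u (x, t) ∂μ := by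
  have : FiniteDimensional ℝ E := B.toBasis.finiteDimensional_of_finite
  rw [setIntegral_setIntegral_eq_setIntegral_prod hu_supp
      (integrableOn_of_contDiffAt hu_compact fun p hp => contDiffAt_carlemanEnergy B
        (inner_pos_of_mem_truncatedCone (hu_supp hp).1) (hu_supp hp).2.1 hu.contDiffAt)
      fun p => carlemanEnergy_eq_zero B,
    setIntegral_setIntegral_eq_setIntegral_prod hu_supp
      (integrableOn_of_contDiffAt hu_compact fun p hp => contDiffAt_carlemanSource B
        (inner_pos_of_mem_truncatedCone (hu_supp hp).1) (hu_supp hp).2.1 hu.contDiffAt)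
      fun p => carlemanSource_eq_zero B]
  exact setIntegral_carlemanEnergy_le B h hν ha hu_compact hu_supp (fun p _ => hu.contDiffAt)
    fun p => image_eq_zero_of_notMem_tsupport

end CarlemanEstimate

section Slices

variable {E : Type*} [NormedAddCommGroup E] {u : E × ℝ → ℝ} {x : E} {t : ℝ}

theorem fderiv_slice_apply [NormedSpace ℝ E] (hu : DifferentiableAt ℝ u (x, t)) (w : E) :
    fderiv ℝ (fun y => u (y, t)) x w = dirDeriv (w, 0) u (x, t) := by
  have slice_deriv : HasFDerivAt (fun y => u (y, t)) _ x :=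
    HasFDerivAt.comp x hu.hasFDerivAt (hasFDerivAt_prodMk_left x t)
  simp [slice_deriv.fderiv, dirDeriv]

theorem deriv_slice [NormedSpace ℝ E] (hu : DifferentiableAt ℝ u (x, t)) :
    deriv (fun s => u (x, s)) t = dirDeriv (0, 1) u (x, t) := by
  have slice_deriv : HasFDerivAt (fun s => u (x, s)) _ t :=
    HasFDerivAt.comp t hu.hasFDerivAt (hasFDerivAt_prodMk_right x t)
  simp [slice_deriv.hasDerivAt.deriv, dirDeriv]

theorem sq_norm_gradient_slice [InnerProductSpace ℝ E] [CompleteSpace E] {ι : Type*} [Fintype ι]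
    (B : OrthonormalBasis ι ℝ E) (hu : DifferentiableAt ℝ u (x, t)) :
    ‖gradient (fun y => u (y, t)) x‖ ^ 2 = gradInner (spatial B) u u (x, t) := by
  rw [← B.sum_sq_inner_left]
  refine Finset.sum_congr rfl fun i _ => ?_
  rw [gradient, InnerProductSpace.toDual_symm_apply, fderiv_slice_apply hu, sq, spatial]

end Slices

section Euclidean

variable {n : ℕ} {u : EuclideanSpace ℝ (Fin n) × ℝ → ℝ} {ε : ℝ}

theorem lap_slice (hu : ContDiff ℝ ∞ u) (x : EuclideanSpace ℝ (Fin n)) (t : ℝ) :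
    lap (fun y => u (y, t)) x =
      laplacianAlong (spatial (EuclideanSpace.basisFun (Fin n) ℝ)) u (x, t) := by
  have dirDeriv_smooth (w : EuclideanSpace ℝ (Fin n) × ℝ) : Differentiable ℝ (dirDeriv w u) :=
    fun p => differentiableAt_of_contDiffAt_infty (contDiffAt_dirDeriv w hu.contDiffAt)
  simp only [lap, laplacianAlong, spatial, EuclideanSpace.basisFun_apply,
    fderiv_slice_apply (hu.differentiable (by simp) _), fderiv_slice_apply (dirDeriv_smooth _ _)]

variable [NeZero n]

theorem cone_inter_halfSpace_eq_truncatedCone (hε : ε ∈ Icc (-1) 1) :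
    cone n (2 * arccos ε) ∩ {x | 1 < x 0} = truncatedCone (EuclideanSpace.single 0 1) ε := by
  ext x
  simp [cone, truncatedCone, mul_div_cancel_left₀, cos_arccos hε.1 hε.2, mul_comm,
    EuclideanSpace.inner_single_left]

theorem carlemanEnergy_euclidean (hu : ContDiff ℝ ∞ u) (ε α a : ℝ)
    (x : EuclideanSpace ℝ (Fin n)) (t : ℝ) :
    carlemanEnergy (EuclideanSpace.single 0 1) ε α a (EuclideanSpace.basisFun (Fin n) ℝ) u (x, t) =
      exp (2 * (a * ((1 - t) / t ^ (α / 2)) * (x 0 ^ α - ε ^ α * ‖x‖ ^ α) + t ^ 2)) *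
        (a * ((1 - t) / t ^ (α / 2) + (x 0 ^ α - ε ^ α * ‖x‖ ^ α)) * u (x, t) ^ 2 +
          ‖gradient (fun y => u (y, t)) x‖ ^ 2) := by
  simp [carlemanEnergy, carlemanWeight, separated, timeWeight, coneWeight, conePower,
    EuclideanSpace.inner_single_left,
    sq_norm_gradient_slice (EuclideanSpace.basisFun (Fin n) ℝ) (hu.differentiable (by simp) _)]

theorem carlemanSource_euclidean (hu : ContDiff ℝ ∞ u) (ε α a : ℝ)
    (x : EuclideanSpace ℝ (Fin n)) (t : ℝ) :
    carlemanSource (EuclideanSpace.single 0 1) ε α a (EuclideanSpace.basisFun (Fin n) ℝ) u (x, t) =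
      exp (2 * (a * ((1 - t) / t ^ (α / 2)) * (x 0 ^ α - ε ^ α * ‖x‖ ^ α) + t ^ 2)) *
        |deriv (fun s => u (x, s)) t + lap (fun y => u (y, t)) x| ^ 2 := by
  rw [carlemanSource, mul_pow, ← exp_nat_mul, Nat.cast_two, sq_abs, lap_slice hu,
    deriv_slice (hu.differentiable (by simp) _)]
  simp [carlemanWeight, separated, timeWeight, coneWeight, conePower,
    EuclideanSpace.inner_single_left]

end Euclidean

/-- The Carleman inequality in the cone `𝒪_θ`, `θ = 2 arccos ε`,
`ε ∈ (0, 1/√3)`, with weight `φ(x,t) = a Λ(t) φ̃(x) + t²`, where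
`Λ(t) = (1-t)/t^{α/2}` and `φ̃(x) = x₁^α - ε^α |x|^α`:
for a suitable `α = α(ε) ∈ (1,2)` and all large `a`, for `u ∈ C₀^∞(Q_θ)`,
`∫_{Q_θ} e^{2φ} (a (Λ + φ̃) u² + |∇u|²) ≤ 4 ∫_{Q_θ} e^{2φ} |∂ₜu + Δu|²`. -/
theorem carleman_cone (n : ℕ) [NeZero n] (hn : 2 ≤ n) (ε : ℝ)
    (hε : ε ∈ Set.Ioo (0 : ℝ) (1 / Real.sqrt 3)) :
    ∃ α ∈ Set.Ioo (1 : ℝ) 2, ∃ a₀ : ℝ, 0 < a₀ ∧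
      ∀ a : ℝ, a₀ < a →
        ∀ u : EuclideanSpace ℝ (Fin n) → ℝ → ℝ,
          ContDiff ℝ (⊤ : ℕ∞) (fun p : EuclideanSpace ℝ (Fin n) × ℝ => u p.1 p.2) →
          HasCompactSupport (fun p : EuclideanSpace ℝ (Fin n) × ℝ => u p.1 p.2) →
          tsupport (fun p : EuclideanSpace ℝ (Fin n) × ℝ => u p.1 p.2) ⊆
            (cone n (2 * Real.arccos ε) ∩ {x | 1 < x 0}) ×ˢ Set.Ioo (0 : ℝ) 1 →
          (∫ t in Set.Ioo (0 : ℝ) 1,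
              ∫ x in cone n (2 * Real.arccos ε) ∩ {x | 1 < x 0},
                Real.exp (2 * (a * ((1 - t) / t ^ (α / 2)) *
                    (x 0 ^ α - ε ^ α * ‖x‖ ^ α) + t ^ 2)) *
                  (a * ((1 - t) / t ^ (α / 2) + (x 0 ^ α - ε ^ α * ‖x‖ ^ α)) *
                      (u x t) ^ 2 +
                    ‖gradient (fun y => u y t) x‖ ^ 2))
            ≤ 4 * ∫ t in Set.Ioo (0 : ℝ) 1,
                ∫ x in cone n (2 * Real.arccos ε) ∩ {x | 1 < x 0},
                  Real.exp (2 * (a * ((1 - t) / t ^ (α / 2)) *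
                      (x 0 ^ α - ε ^ α * ‖x‖ ^ α) + t ^ 2)) *
                    |deriv (u x) t + lap (fun y => u y t) x| ^ 2 := by
  obtain ⟨α, hα⟩ := exists_admissibleExponent hε
  refine ⟨α, ⟨hα.one_lt, hα.lt_two⟩, carlemanThreshold ε α n, carlemanThreshold_pos hα n,
    fun a ha u hu hu_compact hu_supp => ?_⟩
  rw [cone_inter_halfSpace_eq_truncatedCone ⟨by linarith [hα.pos], hα.lt_one.le⟩] at hu_supp ⊢
  have carleman := integral_integral_carlemanEnergy_le (a := a) (μ := volume)
    (EuclideanSpace.basisFun (Fin n) ℝ) hα (ν := EuclideanSpace.single 0 1) (by simp)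
    (by simpa using ha) hu hu_compact hu_supp
  simpa only [carlemanEnergy_euclidean hu, carlemanSource_euclidean hu] using carleman
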